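/- Fix d ≥ 1 and consider the ruin model with ruin set L satisfying Assumption 4.1, allocation vector l, and A := l − L ∈ 𝓡. Suppose Assumption 1.1 holds, Assumption 3.1 holds (in particular r > 0 and F ∈ (𝒞∩𝒫_𝒟)_A), the claim vectors {X^(i), i ≥ 1} are QAI_A, and the perturbation process B is independent of all other sources of randomness. Then the infinite-time ruin probability satisfies, as x → ∞, ψ_{l,L}(x; ∞) ∼ ∫_{[0,∞)} P(X e^{−r s} ∈ x·A) ν(ds), where the right-hand side equals Σ_{i=1}^∞ P(X^(i) e^{−r τ_i} ∈ x·A). -/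

import Mathlib

open MeasureTheory ProbabilityTheory Filter Topology Set
open scoped Pointwise ENNReal NNReal

noncomputable section

/-- The family `𝓡` of open increasing subsets of `ℝ^d` with convex complement,
whose closure avoids the origin. -/
def InRfam (d : ℕ) (A : Set (Fin d → ℝ)) : Prop :=
  IsOpen A ∧ (∀ x ∈ A, ∀ z : Fin d → ℝ, (∀ i, 0 ≤ z i) → x + z ∈ A) ∧
    Convex ℝ Aᶜ ∧ (0 : Fin d → ℝ) ∉ closure A

/-- The functional `z ↦ z_A = sup {u > 0 : z ∈ u • A}` (real `sSup`, so `sup ∅ = 0`). -/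
def projA {d : ℕ} (A : Set (Fin d → ℝ)) (z : Fin d → ℝ) : ℝ :=
  sSup {u : ℝ | 0 < u ∧ z ∈ u • A}

/-- The tail `Ḡ_A(x) = P(Z_A > x)` of the one-dimensional distribution `G_A`
associated with a distribution `G` on `ℝ^d` and a set `A ∈ 𝓡`. -/
def tailA {d : ℕ} (A : Set (Fin d → ℝ)) (G : Measure (Fin d → ℝ)) (x : ℝ) : ℝ :=
  (G {z | x < projA A z}).toReal

/-- Product of two measures (via `bind`, no instance assumptions). -/
def mprod {α β : Type*} [MeasurableSpace α] [MeasurableSpace β]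
    (μ : Measure α) (ν : Measure β) : Measure (α × β) :=
  μ.bind fun a => ν.map (Prod.mk a)

/-- Tail at `x` of `Z¹_A + Z²_A` for independent `Z¹ ∼ G₁`, `Z² ∼ G₂`. -/
def tail2A {d : ℕ} (A : Set (Fin d → ℝ)) (G₁ G₂ : Measure (Fin d → ℝ)) (x : ℝ) : ℝ :=
  ((mprod G₁ G₂) {p | x < projA A p.1 + projA A p.2}).toReal

/-- `G ∈ 𝒮_A`: the distribution `G_A` has everywhere positive tail and is
subexponential, i.e. `P(Z¹_A + Z²_A > x) ∼ 2 Ḡ_A(x)` for independent copies. -/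
def SubexpA {d : ℕ} (A : Set (Fin d → ℝ)) (G : Measure (Fin d → ℝ)) : Prop :=
  (∀ x : ℝ, 0 < tailA A G x) ∧
    Tendsto (fun x => tail2A A G G x / tailA A G x) atTop (𝓝 2)

/-- Convolution: the law of the sum of independent draws from `μ` and `ν`. -/
def mconv {d : ℕ} (μ ν : Measure (Fin d → ℝ)) : Measure (Fin d → ℝ) :=
  (mprod μ ν).map fun p => p.1 + p.2

/-- Regression dependence with explicit constants `x₀, K`, in integrated form:
for every index `i`, finite nonempty `J` not containing `i`, level `xi > x₀` and
measurable set `S` of conditioning values all `> x₀`,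
`P(Z_i > xi, (Z_j)_{j∈J} ∈ S) ≤ K · Ḡ_i(xi) · P((Z_j)_{j∈J} ∈ S)`. -/
def RDwith {Ω : Type*} [MeasurableSpace Ω] (P : Measure Ω) (x₀ K : ℝ)
    {ι : Type*} (Z : ι → Ω → ℝ) : Prop :=
  ∀ i : ι, ∀ J : Finset ι, J.Nonempty → i ∉ J → ∀ xi : ℝ, x₀ < xi →
    ∀ S : Set (J → ℝ), MeasurableSet S → (∀ v ∈ S, ∀ j : J, x₀ < v j) →
      (P {ω | xi < Z i ω ∧ (fun j : J => Z j.1 ω) ∈ S}).toReal ≤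
        K * (P {ω | xi < Z i ω}).toReal * (P {ω | (fun j : J => Z j.1 ω) ∈ S}).toReal

/-- Regression dependence (`RD`). -/
def RD {Ω : Type*} [MeasurableSpace Ω] (P : Measure Ω) {ι : Type*} (Z : ι → Ω → ℝ) : Prop :=
  ∃ x₀ > (0 : ℝ), ∃ K > (0 : ℝ), RDwith P x₀ K Z

/-- `RD_A` for random vectors: the projections `Z^{(i)}_A` are `RD`. -/
def RDA {Ω : Type*} [MeasurableSpace Ω] (P : Measure Ω) {d : ℕ} (A : Set (Fin d → ℝ))
    {ι : Type*} (Z : ι → Ω → Fin d → ℝ) : Prop :=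
  RD P fun i ω => projA A (Z i ω)

/-- Quasi asymptotic independence (`QAI`). -/
def QAI {Ω : Type*} [MeasurableSpace Ω] (P : Measure Ω) {ι : Type*} (Z : ι → Ω → ℝ) : Prop :=
  ∀ i j : ι, i ≠ j →
    Tendsto (fun x : ℝ => (P {ω | x < Z i ω ∧ x < Z j ω}).toReal /
      ((P {ω | x < Z i ω}).toReal + (P {ω | x < Z j ω}).toReal)) atTop (𝓝 0)

/-- `QAI_A` for random vectors: the projections `Z^{(i)}_A` are `QAI`. -/
def QAIA {Ω : Type*} [MeasurableSpace Ω] (P : Measure Ω) {d : ℕ} (A : Set (Fin d → ℝ))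
    {ι : Type*} (Z : ι → Ω → Fin d → ℝ) : Prop :=
  QAI P fun i ω => projA A (Z i ω)

/-- The consistent variation class `𝒞` for a tail function `g`. -/
def ClassC (g : ℝ → ℝ) : Prop :=
  Tendsto (fun b : ℝ => limsup (fun x => g (b * x) / g x) atTop) (𝓝[<] (1 : ℝ)) (𝓝 1)

/-- The positively decreasing class `𝒫_𝒟` for a tail function `g`. -/
def ClassPD (g : ℝ → ℝ) : Prop :=
  ∃ v > (1 : ℝ), limsup (fun x => g (v * x) / g x) atTop < 1

/-- Upper Matuszewska index of a tail function. -/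
def Jplus (g : ℝ → ℝ) : ℝ :=
  -limUnder atTop fun v : ℝ => Real.log (liminf (fun x => g (v * x) / g x) atTop) / Real.log v

/-- Lower Matuszewska index of a tail function. -/
def Jminus (g : ℝ → ℝ) : ℝ :=
  -limUnder atTop fun v : ℝ => Real.log (limsup (fun x => g (v * x) / g x) atTop) / Real.log v

/-- `F ∈ MRV(α, μ)` with associated regularly varying tail `Vbar`: `Vbar` is the
tail of a distribution on `ℝ`, regularly varying with index `−α`; `μ` is a nonzero
measure, finite on Borel sets at positive distance from the origin; and
`P(X ∈ x • B)/Vbar x → μ(B)` for all such `B` with `μ(∂B) = 0`. -/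
def IsMRV {d : ℕ} (F : Measure (Fin d → ℝ)) (α : ℝ) (μ : Measure (Fin d → ℝ))
    (Vbar : ℝ → ℝ) : Prop :=
  (∃ V : Measure ℝ, IsProbabilityMeasure V ∧ ∀ x : ℝ, Vbar x = (V (Ioi x)).toReal) ∧
    (∀ᶠ x in atTop, 0 < Vbar x) ∧
    (∀ t : ℝ, 0 < t → Tendsto (fun x => Vbar (t * x) / Vbar x) atTop (𝓝 (t ^ (-α)))) ∧
    μ ≠ 0 ∧
    (∀ B : Set (Fin d → ℝ), MeasurableSet B → (∃ ε > (0 : ℝ), ∀ z ∈ B, ε ≤ ‖z‖) → μ B ≠ ⊤) ∧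
    (∀ B : Set (Fin d → ℝ), MeasurableSet B → (∃ ε > (0 : ℝ), ∀ z ∈ B, ε ≤ ‖z‖) →
      μ (frontier B) = 0 →
      Tendsto (fun x => (F (x • B)).toReal / Vbar x) atTop (𝓝 ((μ B).toReal)))

/-- Second factorial moment measure `α⁽²⁾` of the point process with points `τ i`:
the mean measure of the off-diagonal pairs `(τ i, τ j)`, `i ≠ j`. -/
def secondFactorial {Ω : Type*} [MeasurableSpace Ω] (P : Measure Ω) (τ : ℕ → Ω → ℝ) :
    Measure (ℝ × ℝ) :=
  Measure.sum fun p : {p : ℕ × ℕ // p.1 ≠ p.2} =>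
    P.map fun ω => (τ p.1.1 ω, τ p.1.2 ω)

/-- The product measure `ν × ν`, where `ν(B) = ∑ᵢ P(τᵢ ∈ B)` is the mean measure. -/
def nuProd {Ω : Type*} [MeasurableSpace Ω] (P : Measure Ω) (τ : ℕ → Ω → ℝ) :
    Measure (ℝ × ℝ) :=
  Measure.sum fun p : ℕ × ℕ => mprod (P.map (τ p.1)) (P.map (τ p.2))

/-- Assumption 3.2 at horizon `T` with constant `C`:
`α⁽²⁾(B) ≤ C · (ν × ν)(B)` for every Borel `B ⊆ [0,T]²`. -/
def Assumption32 {Ω : Type*} [MeasurableSpace Ω] (P : Measure Ω) (τ : ℕ → Ω → ℝ)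
    (T C : ℝ) : Prop :=
  ∀ B : Set (ℝ × ℝ), MeasurableSet B → B ⊆ Icc (0 : ℝ) T ×ˢ Icc (0 : ℝ) T →
    secondFactorial P τ B ≤ ENNReal.ofReal C * nuProd P τ B

/-- Discounted aggregate claims up to a finite time `T`. -/
def Dfin {Ω : Type*} {d : ℕ} (r : ℝ) (X : ℕ → Ω → Fin d → ℝ) (τ : ℕ → Ω → ℝ)
    (T : ℝ) (ω : Ω) : Fin d → ℝ :=
  ∑' i : ℕ, Set.indicator {ω' | τ i ω' ≤ T} (fun ω' => Real.exp (-(r * τ i ω')) • X i ω') ω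

/-- Discounted aggregate claims over the infinite time horizon. -/
def Dinf {Ω : Type*} {d : ℕ} (r : ℝ) (X : ℕ → Ω → Fin d → ℝ) (τ : ℕ → Ω → ℝ)
    (ω : Ω) : Fin d → ℝ :=
  ∑' i : ℕ, Real.exp (-(r * τ i ω)) • X i ω

/-- `J_x(T)`: the number of discounted claims entering `x • A` by time `T`. -/
def Jcount {Ω : Type*} {d : ℕ} (r : ℝ) (X : ℕ → Ω → Fin d → ℝ) (τ : ℕ → Ω → ℝ)
    (A : Set (Fin d → ℝ)) (T x : ℝ) (ω : Ω) : ℝ≥0∞ :=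
  ∑' i : ℕ,
    Set.indicator {ω' | τ i ω' ≤ T ∧ Real.exp (-(r * τ i ω')) • X i ω' ∈ x • A}
      (fun _ => (1 : ℝ≥0∞)) ω

/-- Pathwise discounted stochastic integral `∫₀ᵗ e^{−rs} B(ds)
  = e^{−rt} B(t) + r ∫₀ᵗ e^{−rs} B(s) ds`. -/
def discBM {Ω : Type*} (r : ℝ) (Bi : ℝ → Ω → ℝ) (t : ℝ) (ω : Ω) : ℝ :=
  Real.exp (-(r * t)) * Bi t ω + r * ∫ s in (0 : ℝ)..t, Real.exp (-(r * s)) * Bi s ω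

/-- The insurer's surplus process `U(t)`. -/
def surplus {Ω : Type*} {d : ℕ} (r x : ℝ) (l : Fin d → ℝ) (c : Fin d → ℝ → Ω → ℝ)
    (δv : Fin d → ℝ) (Bm : Fin d → ℝ → Ω → ℝ) (X : ℕ → Ω → Fin d → ℝ) (τ : ℕ → Ω → ℝ)
    (t : ℝ) (ω : Ω) : Fin d → ℝ :=
  fun k => x * l k + (∫ s in (0 : ℝ)..t, Real.exp (-(r * s)) * c k s ω)
    + δv k * discBM r (Bm k) t ω - Dfin r X τ t ω k

/-! ### Part A: tail functions, Matuszewska indices -/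

lemma fekete_interp (ψ : ℝ → ℝ) (hmono : ∀ s t, 0 ≤ s → s ≤ t → ψ s ≤ ψ t)
    (hnn : ∀ s, 0 ≤ s → 0 ≤ ψ s) (ℓ : ℝ)
    (h : Tendsto (fun n : ℕ => ψ n / n) atTop (𝓝 ℓ)) :
    Tendsto (fun s : ℝ => ψ s / s) atTop (𝓝 ℓ) := by
  have hfl : Tendsto (fun s : ℝ => ⌊s⌋₊) atTop atTop := tendsto_nat_floor_atTop
  have h1 : Tendsto (fun n : ℕ => ψ n / n * ((n : ℝ) / ((n : ℝ) + 1))) atTop (𝓝 (ℓ * 1)) :=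
    h.mul (tendsto_natCast_div_add_atTop (1 : ℝ))
  have h2 : Tendsto (fun n : ℕ => ψ ((n + 1 : ℕ) : ℝ) / ((n + 1 : ℕ) : ℝ) *
      ((n : ℝ) / ((n : ℝ) + 1))⁻¹) atTop (𝓝 (ℓ * 1⁻¹)) :=
    (h.comp (tendsto_add_atTop_nat 1)).mul
      ((tendsto_natCast_div_add_atTop (1 : ℝ)).inv₀ one_ne_zero)
  rw [mul_one] at h1
  rw [inv_one, mul_one] at h2
  refine tendsto_of_tendsto_of_tendsto_of_le_of_le' (h1.comp hfl) (h2.comp hfl) ?_ ?_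
  · filter_upwards [eventually_ge_atTop (1 : ℝ)] with s hs
    have hn : (1 : ℝ) ≤ (⌊s⌋₊ : ℝ) := by exact_mod_cast (Nat.one_le_floor_iff s).2 hs
    have hle : (⌊s⌋₊ : ℝ) ≤ s := Nat.floor_le (by linarith)
    have hlt : s < ⌊s⌋₊ + 1 := Nat.lt_floor_add_one s
    have hm := hmono _ _ (by linarith) hle
    have h0 := hnn (⌊s⌋₊ : ℝ) (by linarith)
    simp only [Function.comp]
    rw [div_mul_div_cancel₀ (by positivity)]
    have h0' := hnn s (by linarith)
    gcongr
  · filter_upwards [eventually_ge_atTop (1 : ℝ)] with s hs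
    have hn : (1 : ℝ) ≤ (⌊s⌋₊ : ℝ) := by exact_mod_cast (Nat.one_le_floor_iff s).2 hs
    have hle : (⌊s⌋₊ : ℝ) ≤ s := Nat.floor_le (by linarith)
    have hlt : s < ⌊s⌋₊ + 1 := Nat.lt_floor_add_one s
    have hm := hmono _ _ (by linarith) hlt.le
    have h0 := hnn s (by linarith)
    simp only [Function.comp]
    push_cast
    rw [inv_div, div_mul_div_cancel₀ (by positivity)]
    gcongr
    linarith


lemma classC_event {g : ℝ → ℝ} (hpos : ∀ x, 0 < g x) (hC : ClassC g) {η : ℝ} (hη : 0 < η) :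
    ∃ b : ℝ, 0 < b ∧ b < 1 ∧ ∀ᶠ x in atTop, g (b * x) ≤ (1 + η) * g x := by
  have h1 : ∀ᶠ b in 𝓝[<] (1 : ℝ), limsup (fun x => g (b * x) / g x) atTop ∈ Ioo (1 / 2 : ℝ) (1 + η) :=
    hC (Ioo_mem_nhds (by norm_num) (by linarith))
  have h2 : ∀ᶠ b in 𝓝[<] (1 : ℝ), b ∈ Ioo (0 : ℝ) 1 := Ioo_mem_nhdsLT (by norm_num)
  obtain ⟨b, hb1, hb2⟩ := (h1.and h2).exists
  refine ⟨b, hb2.1, hb2.2, ?_⟩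
  have hbd : IsBoundedUnder (· ≤ ·) atTop (fun x => g (b * x) / g x) := by
    by_contra hcon
    have : limsup (fun x => g (b * x) / g x) atTop = 0 := by
      rw [limsup_eq]
      have he : {a : ℝ | ∀ᶠ x in atTop, g (b * x) / g x ≤ a} = ∅ := by
        ext a
        simp only [mem_ofPred_eq, mem_empty_iff_false, iff_false]
        intro ha
        exact hcon ⟨a, by simpa using ha⟩
      rw [he, Real.sInf_empty]
    rw [this] at hb1
    have := hb1.1
    norm_num at this
  filter_upwards [eventually_lt_of_limsup_lt hb1.2 hbd] with x hx
  rw [div_lt_iff₀ (hpos x)] at hx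
  exact hx.le

lemma classD_event {g : ℝ → ℝ} (hpos : ∀ x, 0 < g x) (hanti : Antitone g) (hC : ClassC g) (s : ℝ) :
    ∃ c : ℝ, 0 < c ∧ ∀ᶠ x in atTop, c * g x ≤ g (s * x) := by
  obtain ⟨b, hb0, hb1, hb⟩ := classC_event hpos hC one_pos
  have key : ∀ n : ℕ, ∀ᶠ x in atTop, (1 / 2 : ℝ) ^ n * g x ≤ g ((1 / b) ^ n * x) := by
    intro n
    induction n with
    | zero => simp
    | succ n ih =>
      have ht : Tendsto (fun x : ℝ => (1 / b) ^ (n + 1) * x) atTop atTop :=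
        Tendsto.const_mul_atTop (by positivity) tendsto_id
      filter_upwards [ih, ht.eventually hb] with x h1 h2
      have : b * ((1 / b) ^ (n + 1) * x) = (1 / b) ^ n * x := by
        rw [pow_succ]
        field_simp
      rw [this] at h2
      rw [pow_succ]
      linarith
  obtain ⟨n, hn⟩ := pow_unbounded_of_one_lt s (one_lt_one_div hb0 hb1)
  refine ⟨(1 / 2) ^ n, by positivity, ?_⟩
  filter_upwards [key n, eventually_ge_atTop 0] with x hx hx0
  refine hx.trans (hanti ?_)
  gcongr

lemma ratio_bdd_above {g : ℝ → ℝ} (hpos : ∀ x, 0 < g x) (hanti : Antitone g) {v : ℝ} (hv : 1 ≤ v) :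
    IsBoundedUnder (· ≤ ·) atTop (fun x => g (v * x) / g x) := by
  refine ⟨1, ?_⟩
  simp only [eventually_map]
  filter_upwards [eventually_ge_atTop 0] with x hx
  rw [div_le_one (hpos x)]
  exact hanti (by nlinarith)

lemma ratio_bdd_below {g : ℝ → ℝ} (hpos : ∀ x, 0 < g x) {v : ℝ} :
    IsBoundedUnder (· ≥ ·) atTop (fun x => g (v * x) / g x) :=
  ⟨0, eventually_map.2 (Eventually.of_forall fun y => (div_pos (hpos (v * y)) (hpos y)).le)⟩

lemma subadd_interp (ψ : ℝ → ℝ) (hmono : ∀ s t, 0 ≤ s → s ≤ t → ψ s ≤ ψ t)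
    (hnn : ∀ s, 0 ≤ s → 0 ≤ ψ s)
    (hsub : ∀ s t, 0 ≤ s → 0 ≤ t → ψ (s + t) ≤ ψ s + ψ t) :
    ∃ ℓ, Tendsto (fun s : ℝ => ψ s / s) atTop (𝓝 ℓ) := by
  have hs : Subadditive (fun n : ℕ => ψ n) := by
    intro m n
    push_cast
    exact hsub _ _ (by positivity) (by positivity)
  refine ⟨_, fekete_interp ψ hmono hnn _ (hs.tendsto_lim ?_)⟩
  refine ⟨0, ?_⟩
  rintro _ ⟨n, rfl⟩
  exact div_nonneg (hnn _ (by positivity)) (by positivity)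

lemma superadd_interp (ψ : ℝ → ℝ) (hmono : ∀ s t, 0 ≤ s → s ≤ t → ψ s ≤ ψ t)
    (hnn : ∀ s, 0 ≤ s → 0 ≤ ψ s) (K : ℝ) (hK : ∀ n : ℕ, ψ n ≤ K * n)
    (hsub : ∀ s t, 0 ≤ s → 0 ≤ t → ψ s + ψ t ≤ ψ (s + t)) :
    ∃ ℓ, Tendsto (fun s : ℝ => ψ s / s) atTop (𝓝 ℓ) := by
  have hs : Subadditive (fun n : ℕ => - ψ n) := by
    intro m n
    push_cast
    have := hsub m n (by positivity) (by positivity)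
    linarith
  refine ⟨-hs.lim, fekete_interp ψ hmono hnn _ ?_⟩
  have := (hs.tendsto_lim ?_).neg
  · refine this.congr fun n => ?_
    rw [neg_div, neg_neg]
  refine ⟨-max K 0, ?_⟩
  rintro _ ⟨n, rfl⟩
  simp only
  rw [neg_div, neg_le_neg_iff]
  rcases Nat.eq_zero_or_pos n with rfl | hn
  · simp
  · rw [div_le_iff₀ (by exact_mod_cast hn)]
    refine (hK n).trans ?_
    gcongr
    exact le_max_left _ _

lemma liminf_ratio_props {g : ℝ → ℝ} (hpos : ∀ x, 0 < g x) (hanti : Antitone g) (hC : ClassC g) :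
    (∀ v, 1 ≤ v → 0 < liminf (fun x => g (v * x) / g x) atTop) ∧
    (∀ v, 1 ≤ v → liminf (fun x => g (v * x) / g x) atTop ≤ 1) ∧
    (∀ v w, 1 ≤ v → v ≤ w → liminf (fun x => g (w * x) / g x) atTop ≤
      liminf (fun x => g (v * x) / g x) atTop) ∧
    (∀ v w, 1 ≤ v → 1 ≤ w → liminf (fun x => g (v * x) / g x) atTop *
      liminf (fun x => g (w * x) / g x) atTop ≤ liminf (fun x => g (v * w * x) / g x) atTop) := by
  have hcob : ∀ v, 1 ≤ v → IsCoboundedUnder (· ≥ ·) atTop (fun x => g (v * x) / g x) :=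
    fun v hv => (ratio_bdd_above hpos hanti hv).isCoboundedUnder_ge
  have hP : ∀ v, 1 ≤ v → 0 < liminf (fun x => g (v * x) / g x) atTop := by
    intro v hv
    obtain ⟨c, hc, hcx⟩ := classD_event hpos hanti hC v
    refine hc.trans_le (le_liminf_of_le (hcob v hv) ?_)
    filter_upwards [hcx] with x hx
    rwa [le_div_iff₀ (hpos x)]
  refine ⟨hP, ?_, ?_, ?_⟩
  · intro v hv
    refine liminf_le_of_frequently_le ?_ (ratio_bdd_below hpos)
    refine Eventually.frequently ?_
    filter_upwards [eventually_ge_atTop 0] with x hx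
    rw [div_le_one (hpos x)]
    exact hanti (by nlinarith)
  · intro v w hv hw
    refine liminf_le_liminf ?_ (ratio_bdd_below hpos) (hcob v hv)
    filter_upwards [eventually_ge_atTop 0] with x hx
    have := hpos x
    gcongr
    exact hanti (by nlinarith)
  · intro v w hv hw
    refine le_of_forall_lt_imp_le_of_dense ?_
    intro z hz
    by_cases hz0 : z ≤ 0
    · exact hz0.trans (hP _ (by nlinarith)).le
    push Not at hz0
    set f := liminf (fun x => g (v * x) / g x) atTop with hf
    set f' := liminf (fun x => g (w * x) / g x) atTop with hf'
    have hf0 := hP v hv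
    have hf'0 := hP w hw
    -- choose a < f with a * f' > z
    obtain ⟨a, ha1, ha2⟩ := exists_between ((div_lt_iff₀ hf'0).2 hz)
    have ha0 : 0 < a := lt_trans (by positivity) ha1
    have hb1 : z / a < f' := by
      rw [div_lt_iff₀ ha0]
      rw [div_lt_iff₀ hf'0] at ha1
      linarith
    have e1 := eventually_lt_of_lt_liminf ha2 (ratio_bdd_below hpos)
    have e2 := eventually_lt_of_lt_liminf hb1 (ratio_bdd_below hpos)
    have ht : Tendsto (fun x : ℝ => w * x) atTop atTop :=
      Tendsto.const_mul_atTop (by positivity) tendsto_id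
    refine le_liminf_of_le (hcob _ (by nlinarith)) ?_
    filter_upwards [ht.eventually e1, e2] with x h1 h2
    rw [lt_div_iff₀ (hpos _)] at h1 h2
    rw [le_div_iff₀ (hpos _), mul_assoc]
    have : a * (z / a * g x) ≤ a * g (w * x) := by gcongr
    have h3 : a * (z / a * g x) = z * g x := by field_simp
    linarith

lemma limsup_ratio_props {g : ℝ → ℝ} (hpos : ∀ x, 0 < g x) (hanti : Antitone g) (hC : ClassC g) :
    (∀ v, 1 ≤ v → liminf (fun x => g (v * x) / g x) atTop ≤ limsup (fun x => g (v * x) / g x) atTop) ∧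
    (∀ v, 1 ≤ v → limsup (fun x => g (v * x) / g x) atTop ≤ 1) ∧
    (∀ v w, 1 ≤ v → v ≤ w → limsup (fun x => g (w * x) / g x) atTop ≤
      limsup (fun x => g (v * x) / g x) atTop) ∧
    (∀ v w, 1 ≤ v → 1 ≤ w → limsup (fun x => g (v * w * x) / g x) atTop ≤
      limsup (fun x => g (v * x) / g x) atTop * limsup (fun x => g (w * x) / g x) atTop) := by
  have hcob : ∀ v, IsCoboundedUnder (· ≤ ·) atTop (fun x => g (v * x) / g x) :=
    fun v => (ratio_bdd_below hpos).isCoboundedUnder_le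
  have hPi := (liminf_ratio_props hpos hanti hC).1
  have hA : ∀ v, 1 ≤ v → liminf (fun x => g (v * x) / g x) atTop ≤
      limsup (fun x => g (v * x) / g x) atTop := fun v hv =>
    liminf_le_limsup (ratio_bdd_above hpos hanti hv) (ratio_bdd_below hpos)
  refine ⟨hA, ?_, ?_, ?_⟩
  · intro v hv
    refine limsup_le_of_le (hcob v) ?_
    filter_upwards [eventually_ge_atTop 0] with x hx
    rw [div_le_one (hpos x)]
    exact hanti (by nlinarith)
  · intro v w hv hw
    refine limsup_le_limsup ?_ (hcob w) (ratio_bdd_above hpos hanti hv)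
    filter_upwards [eventually_ge_atTop 0] with x hx
    have := hpos x
    gcongr
    exact hanti (by nlinarith)
  · intro v w hv hw
    have hf0 := (hPi v hv).trans_le (hA v hv)
    have hf'0 := (hPi w hw).trans_le (hA w hw)
    set f := limsup (fun x => g (v * x) / g x) atTop with hf
    set f' := limsup (fun x => g (w * x) / g x) atTop with hf'
    refine le_of_forall_gt_imp_ge_of_dense ?_
    intro z hz
    have hz0 : 0 < z := lt_trans (by positivity) hz
    obtain ⟨a, ha1, ha2⟩ := exists_between ((lt_div_iff₀ hf'0).2 hz)
    have ha0 : 0 < a := lt_trans (by positivity) ha1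
    have hb1 : f' < z / a := by
      rw [lt_div_iff₀ ha0]
      rw [lt_div_iff₀ hf'0] at ha2
      linarith
    have e1 := eventually_lt_of_limsup_lt ha1 (ratio_bdd_above hpos hanti hv)
    have e2 := eventually_lt_of_limsup_lt hb1 (ratio_bdd_above hpos hanti hw)
    have ht : Tendsto (fun x : ℝ => w * x) atTop atTop :=
      Tendsto.const_mul_atTop (by positivity) tendsto_id
    refine limsup_le_of_le (hcob _) ?_
    filter_upwards [ht.eventually e1, e2] with x h1 h2
    rw [div_lt_iff₀ (hpos _)] at h1 h2
    rw [div_le_iff₀ (hpos _), mul_assoc]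
    have : a * g (w * x) ≤ a * (z / a * g x) := by gcongr
    have h3 : a * (z / a * g x) = z * g x := by field_simp
    linarith

lemma Jplus_event {g : ℝ → ℝ} (hpos : ∀ x, 0 < g x) (hanti : Antitone g) (hC : ClassC g) {p : ℝ} (hp : Jplus g < p) :
    ∃ v κ : ℝ, 1 < v ∧ 0 < κ ∧ 1 < κ * v ^ p ∧ ∀ᶠ x in atTop, κ * g x ≤ g (v * x) := by
  obtain ⟨P1, P2, P3, P4⟩ := liminf_ratio_props hpos hanti hC
  set f : ℝ → ℝ := fun v => liminf (fun x => g (v * x) / g x) atTop with hf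
  have hexp : ∀ s : ℝ, 0 ≤ s → 1 ≤ Real.exp s := fun s hs => Real.one_le_exp hs
  obtain ⟨ℓ, hℓ⟩ := subadd_interp (fun s => -Real.log (f (Real.exp s)))
    (fun s t hs hst => by
      have := P3 _ _ (hexp s hs) (Real.exp_le_exp.2 hst)
      have h2 := Real.log_le_log (P1 _ (hexp t (hs.trans hst))) this
      simp only [hf]; linarith)
    (fun s hs => by
      have := Real.log_nonpos (P1 _ (hexp s hs)).le (P2 _ (hexp s hs))
      simp only [hf]; linarith)
    (fun s t hs ht => by
      have h1 := P4 _ _ (hexp s hs) (hexp t ht)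
      rw [← Real.exp_add] at h1
      have h2 := Real.log_le_log (mul_pos (P1 _ (hexp s hs)) (P1 _ (hexp t ht))) h1
      rw [Real.log_mul (P1 _ (hexp s hs)).ne' (P1 _ (hexp t ht)).ne'] at h2
      simp only [hf]; linarith)
  have hlim : Tendsto (fun v : ℝ => Real.log (f v) / Real.log v) atTop (𝓝 (-ℓ)) := by
    have := (hℓ.comp Real.tendsto_log_atTop).neg
    refine this.congr' ?_
    filter_upwards [eventually_gt_atTop 0] with v hv
    simp only [Function.comp, Real.exp_log hv]
    rw [neg_div, neg_neg]
  have hJ : Jplus g = ℓ := by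
    unfold Jplus
    rw [hlim.limUnder_eq, neg_neg]
  rw [hJ] at hp
  obtain ⟨v, hv, hv1⟩ := ((hlim.eventually (lt_mem_nhds (neg_lt_neg hp))).and
    (eventually_gt_atTop 1)).exists
  have hlv : 0 < Real.log v := Real.log_pos hv1
  rw [lt_div_iff₀ hlv] at hv
  have hfv : v ^ (-p) < f v := by
    rw [Real.rpow_def_of_pos (by linarith), ← Real.lt_log_iff_exp_lt (P1 v hv1.le)]
    linarith
  obtain ⟨κ, hκ1, hκ2⟩ := exists_between hfv
  have hvp : 0 < v ^ (-p) := Real.rpow_pos_of_pos (by linarith) _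
  refine ⟨v, κ, hv1, hvp.trans hκ1, ?_, ?_⟩
  · rw [Real.rpow_neg (by linarith), inv_lt_iff_one_lt_mul₀ (Real.rpow_pos_of_pos (by linarith) _)] at hκ1
    linarith
  · filter_upwards [eventually_lt_of_lt_liminf hκ2 (ratio_bdd_below hpos)] with x hx
    rw [lt_div_iff₀ (hpos x)] at hx
    exact hx.le

lemma Jminus_event {g : ℝ → ℝ} (hpos : ∀ x, 0 < g x) (hanti : Antitone g) (hC : ClassC g) {q : ℝ} (hq : q < Jminus g) :
    ∃ v : ℝ, 1 < v ∧ ∀ᶠ x in atTop, g (v * x) ≤ v ^ (-q) * g x := by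
  obtain ⟨Q1, Q2, Q3, Q4⟩ := liminf_ratio_props hpos hanti hC
  obtain ⟨P0, P2, P3, P4⟩ := limsup_ratio_props hpos hanti hC
  have P1 : ∀ v, 1 ≤ v → 0 < limsup (fun x => g (v * x) / g x) atTop :=
    fun v hv => (Q1 v hv).trans_le (P0 v hv)
  set f : ℝ → ℝ := fun v => limsup (fun x => g (v * x) / g x) atTop with hf
  set f' : ℝ → ℝ := fun v => liminf (fun x => g (v * x) / g x) atTop with hf'
  have hexp : ∀ s : ℝ, 0 ≤ s → 1 ≤ Real.exp s := fun s hs => Real.one_le_exp hs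
  obtain ⟨ℓ, hℓ⟩ := superadd_interp (fun s => -Real.log (f (Real.exp s)))
    (fun s t hs hst => by
      have := P3 _ _ (hexp s hs) (Real.exp_le_exp.2 hst)
      have h2 := Real.log_le_log (P1 _ (hexp t (hs.trans hst))) this
      simp only [hf]; linarith)
    (fun s hs => by
      have := Real.log_nonpos (P1 _ (hexp s hs)).le (P2 _ (hexp s hs))
      simp only [hf]; linarith)
    (-Real.log (f' (Real.exp 1)))
    (fun n => by
      have key : ∀ n : ℕ, n * Real.log (f' (Real.exp 1)) ≤ Real.log (f' (Real.exp n)) := by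
        intro n
        induction n with
        | zero =>
          simp only [Nat.cast_zero, zero_mul, Real.exp_zero]
          apply Real.log_nonneg
          simp only [hf', one_mul]
          have : (fun x => g x / g x) = fun _ => (1 : ℝ) := by
            ext x; exact div_self (hpos x).ne'
          rw [this, liminf_const]
        | succ n ih =>
          have h1 := Q4 _ _ (hexp n (by positivity)) (hexp 1 zero_le_one)
          rw [← Real.exp_add] at h1
          have h2 := Real.log_le_log (mul_pos (Q1 _ (hexp n (by positivity))) (Q1 _ (hexp 1 zero_le_one))) h1
          rw [Real.log_mul (Q1 _ (hexp n (by positivity))).ne' (Q1 _ (hexp 1 zero_le_one)).ne'] at h2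
          push_cast
          simp only [hf'] at ih ⊢
          linarith
      have h1 := key n
      have h2 := Real.log_le_log (Q1 _ (hexp n (by positivity))) (P0 _ (hexp n (by positivity)))
      simp only [hf, hf'] at h1 ⊢
      linarith)
    (fun s t hs ht => by
      have h1 := P4 _ _ (hexp s hs) (hexp t ht)
      rw [← Real.exp_add] at h1
      have h2 := Real.log_le_log (P1 _ (hexp (s+t) (by linarith))) h1
      rw [Real.log_mul (P1 _ (hexp s hs)).ne' (P1 _ (hexp t ht)).ne'] at h2
      simp only [hf]; linarith)
  have hlim : Tendsto (fun v : ℝ => Real.log (f v) / Real.log v) atTop (𝓝 (-ℓ)) := by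
    have := (hℓ.comp Real.tendsto_log_atTop).neg
    refine this.congr' ?_
    filter_upwards [eventually_gt_atTop 0] with v hv
    simp only [Function.comp, Real.exp_log hv]
    rw [neg_div, neg_neg]
  have hJ : Jminus g = ℓ := by
    unfold Jminus
    rw [hlim.limUnder_eq, neg_neg]
  rw [hJ] at hq
  obtain ⟨v, hv, hv1⟩ := ((hlim.eventually (gt_mem_nhds (neg_lt_neg hq))).and
    (eventually_gt_atTop 1)).exists
  have hlv : 0 < Real.log v := Real.log_pos hv1
  rw [div_lt_iff₀ hlv] at hv
  have hfv : f v < v ^ (-q) := by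
    rw [Real.rpow_def_of_pos (by linarith), ← Real.log_lt_iff_lt_exp (P1 v hv1.le)]
    linarith
  refine ⟨v, hv1, ?_⟩
  filter_upwards [eventually_lt_of_limsup_lt hfv (ratio_bdd_above hpos hanti hv1.le)] with x hx
  rw [div_lt_iff₀ (hpos x)] at hx
  exact hx.le

/-- Potter type upper bound. -/
lemma potter_upper {g : ℝ → ℝ} (hpos : ∀ x, 0 < g x) (hanti : Antitone g) {q v : ℝ} (hq : 0 < q) (hv : 1 < v)
    (hev : ∀ᶠ x in atTop, g (v * x) ≤ v ^ (-q) * g x) :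
    ∃ C x₀ : ℝ, 0 < C ∧ 0 < x₀ ∧ ∀ x, x₀ ≤ x → ∀ s, 1 ≤ s → g (s * x) ≤ C * s ^ (-q) * g x := by
  obtain ⟨x₁, hx₁⟩ := eventually_atTop.1 hev
  have hv0 : 0 < v := by linarith
  refine ⟨v ^ q, max x₁ 1, by positivity, by positivity, ?_⟩
  intro x hx s hs
  have hx0 : 0 < x := lt_of_lt_of_le (by positivity) hx
  have key : ∀ n : ℕ, g (v ^ n * x) ≤ (v ^ (-q)) ^ n * g x := by
    intro n
    induction n with
    | zero => simp
    | succ n ih =>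
      have h1 := hx₁ (v ^ n * x) (by
        have : x₁ ≤ x := (le_max_left _ _).trans hx
        have h2 : 1 ≤ v ^ n := one_le_pow₀ hv.le
        nlinarith)
      have h0 : 0 ≤ v ^ (-q) := by positivity
      calc g (v ^ (n + 1) * x) = g (v * (v ^ n * x)) := by rw [pow_succ]; ring_nf
        _ ≤ v ^ (-q) * g (v ^ n * x) := h1
        _ ≤ v ^ (-q) * ((v ^ (-q)) ^ n * g x) := by gcongr
        _ = _ := by rw [pow_succ]; ring
  obtain ⟨n, hn1, hn2⟩ := exists_nat_pow_near hs hv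
  have hgx := hpos x
  calc g (s * x) ≤ g (v ^ n * x) := hanti (by gcongr)
    _ ≤ (v ^ (-q)) ^ n * g x := key n
    _ ≤ v ^ q * s ^ (-q) * g x := by
      gcongr
      have e1 : (v ^ (-q)) ^ n = v ^ q * (v ^ (n + 1)) ^ (-q) := by
        rw [← Real.rpow_natCast, ← Real.rpow_mul hv0.le, ← Real.rpow_natCast v (n+1), ← Real.rpow_mul hv0.le,
          ← Real.rpow_add hv0]
        congr 1
        push_cast
        ring
      rw [e1]
      have : (v ^ (n + 1)) ^ (-q) ≤ s ^ (-q) :=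
        Real.rpow_le_rpow_of_nonpos (by linarith) hn2.le (by linarith)
      gcongr

/-- Induction principle behind Karamata-type estimates: if `T` satisfies
`T (v y) ≤ T y + (v y)^p g y`, is bounded on bounded sets, then `T y ≤ C y^p g y`. -/
lemma karamata_induct {g : ℝ → ℝ} (hpos : ∀ x, 0 < g x) (hanti : Antitone g) {p v κ : ℝ} (hp : 0 < p) (hv : 1 < v) (hκ : 1 < κ * v ^ p)
    (hev : ∀ᶠ x in atTop, κ * g x ≤ g (v * x)) (T : ℝ → ℝ)
    (hT0 : ∀ y, 0 < y → T y ≤ y ^ p)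
    (hT : ∀ y, 0 < y → T (v * y) ≤ T y + (v * y) ^ p * g y) :
    ∃ C x₀ : ℝ, 0 < C ∧ 0 < x₀ ∧ ∀ y, x₀ ≤ y → T y ≤ C * y ^ p * g y := by
  obtain ⟨x₁, hx₁⟩ := eventually_atTop.1 hev
  have hv0 : 0 < v := by linarith
  set x₀ := max x₁ 1 with hx₀
  have hx₀0 : 0 < x₀ := by positivity
  set C := max ((v * x₀) ^ p / (x₀ ^ p * g (v * x₀))) (v ^ p / (κ * v ^ p - 1)) with hC
  have hκ' : 0 < κ * v ^ p - 1 := by linarith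
  have hC0 : 0 < C := lt_of_lt_of_le (by positivity) (le_max_right _ _)
  have hC1 : (v * x₀) ^ p ≤ C * (x₀ ^ p * g (v * x₀)) := by
    rw [← div_le_iff₀ (mul_pos (by positivity) (hpos _))]
    exact le_max_left _ _
  have hC2 : v ^ p ≤ C * (κ * v ^ p - 1) := by
    rw [← div_le_iff₀ hκ']
    exact le_max_right _ _
  have key : ∀ n : ℕ, ∀ y, x₀ ≤ y → y ≤ v ^ n * (v * x₀) → T y ≤ C * y ^ p * g y := by
    intro n
    induction n with
    | zero =>
      intro y hy1 hy2
      rw [pow_zero, one_mul] at hy2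
      have hy0 : 0 < y := hx₀0.trans_le hy1
      have := hpos (v * x₀)
      calc T y ≤ y ^ p := hT0 y hy0
        _ ≤ (v * x₀) ^ p := by gcongr
        _ ≤ C * (x₀ ^ p * g (v * x₀)) := hC1
        _ ≤ C * (y ^ p * g y) := by
          gcongr
          exact hanti hy2
        _ = _ := by ring
    | succ n ih =>
      intro y hy1 hy2
      by_cases h : y ≤ v * x₀
      · refine ih y hy1 (h.trans ?_)
        have : 1 ≤ v ^ n := one_le_pow₀ hv.le
        have h3 : 0 < v * x₀ := by positivity
        nlinarith
      push Not at h
      set z := y / v with hz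
      have hyz : y = v * z := by rw [hz]; field_simp
      have hz1 : x₀ ≤ z := by rw [hz, le_div_iff₀ hv0]; linarith
      have hz0 : 0 < z := hx₀0.trans_le hz1
      have hz2 : z ≤ v ^ n * (v * x₀) := by
        rw [hz, div_le_iff₀ hv0]; rw [pow_succ] at hy2; linarith
      have h1 := ih z hz1 hz2
      have h2 := hT z hz0
      have h3 := hx₁ z ((le_max_left _ _).trans hz1)
      rw [← hyz] at h2 h3
      have hyp : y ^ p = v ^ p * z ^ p := by rw [hyz, Real.mul_rpow hv0.le hz0.le]
      have hgz := hpos z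
      have hzp : 0 < z ^ p := by positivity
      calc T y ≤ C * z ^ p * g z + y ^ p * g z := by linarith
        _ = (C + v ^ p) * (z ^ p * g z) := by rw [hyp]; ring
        _ ≤ (C * (κ * v ^ p)) * (z ^ p * g z) := by
          gcongr
          linarith
        _ = C * y ^ p * (κ * g z) := by rw [hyp]; ring
        _ ≤ C * y ^ p * g y := by
          have : 0 ≤ C * y ^ p := by rw [hyp]; positivity
          gcongr
  refine ⟨C, x₀, hC0, hx₀0, ?_⟩
  intro y hy
  obtain ⟨n, hn⟩ := pow_unbounded_of_one_lt (y / (v * x₀)) hv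
  refine key n y hy ?_
  rw [div_lt_iff₀ (by positivity)] at hn
  exact hn.le

/-! ### Part B: suprema of Brownian motion -/

lemma gaussian_moment_tail (b : ℕ) (hb : 1 ≤ b) : ∃ C : ℝ, 0 ≤ C ∧ ∀ t : ℝ, 0 < t → ∀ y : ℝ, 0 < y →
    gaussianReal 0 (Real.toNNReal t) {z | y < |z|} ≤ ENNReal.ofReal (C * t ^ b / y ^ (2 * b)) := by
  set γ := gaussianReal 0 1
  have hint : Integrable (fun z : ℝ => ‖z‖ ^ (2 * b)) γ := by
    have := (memLp_id_gaussianReal (μ := 0) (v := 1) ((2 * b : ℕ) : ℝ≥0)).integrable_norm_pow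
      (by simp; omega)
    simpa using this
  refine ⟨∫ z, ‖z‖ ^ (2 * b) ∂γ, integral_nonneg (fun z => by positivity), ?_⟩
  intro t ht y hy
  have hs : 0 < √t := Real.sqrt_pos.2 ht
  have hmap : gaussianReal 0 (Real.toNNReal t) = γ.map (fun z => √t * z) := by
    rw [gaussianReal_map_const_mul]
    congr 1
    · simp
    · ext
      simp [Real.sq_sqrt ht.le, ht.le]
  rw [hmap, Measure.map_apply (by fun_prop) (measurableSet_lt measurable_const (by fun_prop))]
  have hsub : (fun z => √t * z) ⁻¹' {z | y < |z|} ⊆ {z | y ^ (2 * b) / t ^ b ≤ ‖z‖ ^ (2 * b)} := by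
    intro z hz
    simp only [mem_preimage, mem_ofPred_eq] at hz ⊢
    rw [div_le_iff₀ (by positivity)]
    have h1 : ‖z‖ ^ (2 * b) * t ^ b = (|√t * z|) ^ (2 * b) := by
      rw [abs_mul, mul_pow, abs_of_pos hs, pow_mul (√t), Real.sq_sqrt ht.le, Real.norm_eq_abs]
      ring
    rw [h1]
    gcongr
  refine (measure_mono hsub).trans ?_
  have hc : 0 < y ^ (2 * b) / t ^ b := by positivity
  have := mul_meas_ge_le_integral_of_nonneg (μ := γ) (f := fun z : ℝ => ‖z‖ ^ (2 * b))
    (Eventually.of_forall fun z => by positivity) hint (y ^ (2 * b) / t ^ b)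
  rw [← ofReal_measureReal]
  apply ENNReal.ofReal_le_ofReal
  rw [mul_div_assoc, ← inv_div (y ^ (2 * b)), ← div_eq_mul_inv, le_div_iff₀ hc]
  linarith

lemma chaining (f : ℝ → ℝ) (hf : Continuous f) (hf0 : f 0 = 0) {T y : ℝ} (hT : 0 < T) (hy : 0 < y)
    (h : ∀ m k : ℕ, k < 2 ^ m →
      |f (T * ((k : ℝ) + 1) / 2 ^ m) - f (T * k / 2 ^ m)| ≤ y / 10 * (9 / 10) ^ m) :
    ∀ t, 0 ≤ t → t ≤ T → |f t| ≤ y := by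
  have h1 : ∀ m : ℕ, ∀ k : ℕ, k ≤ 2 ^ m → |f (T * k / 2 ^ m)| ≤ y * (1 - (9 / 10) ^ (m + 1)) := by
    intro m
    induction m with
    | zero =>
      intro k hk
      rw [pow_zero] at hk
      interval_cases k
      · simp [hf0]; nlinarith
      · have := h 0 0 (by norm_num)
        simp [hf0] at this ⊢
        linarith
    | succ m ih =>
      intro k hk
      have hp : (0 : ℝ) < (9 / 10) ^ (m + 1) := by positivity
      have hstep : ∀ j : ℕ, T * ((2 * j : ℕ) : ℝ) / 2 ^ (m + 1) = T * j / 2 ^ m := by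
        intro j; push_cast; rw [pow_succ]; field_simp
      rcases Nat.even_or_odd' k with ⟨j, rfl | rfl⟩
      · rw [hstep]
        refine (ih j ?_).trans ?_
        · rw [pow_succ] at hk; omega
        · rw [pow_succ (9 / 10 : ℝ) (m + 1)]; nlinarith
      · have e1 := ih j (by rw [pow_succ] at hk; omega)
        have e2 := h (m + 1) (2 * j) (by omega)
        rw [hstep] at e2
        have e3 : T * (((2 * j : ℕ) : ℝ) + 1) / 2 ^ (m + 1) = T * ((2 * j + 1 : ℕ) : ℝ) / 2 ^ (m + 1) := by
          push_cast; rfl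
        rw [e3] at e2
        have e4 := abs_sub_abs_le_abs_sub (f (T * ((2 * j + 1 : ℕ) : ℝ) / 2 ^ (m + 1))) (f (T * j / 2 ^ m))
        have e5 : y * (1 - (9 / 10 : ℝ) ^ (m + 1 + 1)) =
          y * (1 - (9 / 10 : ℝ) ^ (m + 1)) + y / 10 * (9 / 10) ^ (m + 1) := by
          rw [pow_succ (9 / 10 : ℝ) (m + 1)]; ring
        rw [e5]
        linarith
  intro t ht0 htT
  have hlim : Tendsto (fun m : ℕ => T * ((⌊(t / T) * 2 ^ m⌋₊ : ℝ) / 2 ^ m)) atTop (𝓝 (T * (t / T))) := by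
    refine Tendsto.const_mul _ ?_
    have h2 : Tendsto (fun m : ℕ => (2 : ℝ) ^ m) atTop atTop :=
      tendsto_pow_atTop_atTop_of_one_lt (by norm_num)
    exact (tendsto_nat_floor_mul_div_atTop (R := ℝ) (a := t / T) (by positivity)).comp h2
  rw [mul_div_cancel₀ _ hT.ne'] at hlim
  have hlim2 := ((hf.tendsto t).comp hlim).abs
  refine le_of_tendsto hlim2 (Eventually.of_forall fun m => ?_)
  have h3 := h1 m ⌊(t / T) * 2 ^ m⌋₊ (by
    have : (⌊(t / T) * 2 ^ m⌋₊ : ℝ) ≤ 2 ^ m := by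
      refine (Nat.floor_le (by positivity)).trans ?_
      have : t / T ≤ 1 := by rw [div_le_one hT]; exact htT
      have h2 : (0 : ℝ) < 2 ^ m := by positivity
      nlinarith
    exact_mod_cast this)
  simp only [Function.comp]
  rw [← mul_div_assoc]
  refine h3.trans ?_
  have hp : (0 : ℝ) < (9 / 10) ^ (m + 1) := by positivity
  nlinarith

lemma bm_sup_finite {Ω : Type*} [MeasurableSpace Ω] (P : Measure Ω)
    (Bi : ℝ → Ω → ℝ) (hB0 : ∀ ω, Bi 0 ω = 0) (hBmeas : ∀ t, Measurable (Bi t))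
    (hBcont : ∀ᵐ ω ∂P, Continuous fun t => Bi t ω)
    (hBgauss : ∀ s t : ℝ, 0 ≤ s → s < t →
      P.map (fun ω => Bi t ω - Bi s ω) = gaussianReal 0 (Real.toNNReal (t - s)))
    (b : ℕ) (hb : 2 ≤ b) :
    ∃ C : ℝ, 0 ≤ C ∧ ∀ T y : ℝ, 0 < T → 0 < y →
      P {ω | ∃ t, 0 ≤ t ∧ t ≤ T ∧ y < |Bi t ω|} ≤ ENNReal.ofReal (C * T ^ b / y ^ (2 * b)) := by
  obtain ⟨C, hC, hG⟩ := gaussian_moment_tail b (by omega)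
  set θ : ℝ := 2 * (100 / 162) ^ b with hθ
  have hθ0 : 0 ≤ θ := by positivity
  have hθ1 : θ < 1 := by
    have : (100 / 162 : ℝ) ^ b ≤ (100 / 162) ^ 2 := pow_le_pow_of_le_one (by norm_num) (by norm_num) hb
    rw [hθ]; norm_num at this ⊢; linarith
  refine ⟨C * 10 ^ (2 * b) * (1 - θ)⁻¹, by
    have : 0 < 1 - θ := by linarith
    positivity, ?_⟩
  intro T y hT hy
  set N := {ω | ¬ Continuous fun t => Bi t ω} with hN
  have hN0 : P N = 0 := hBcont
  set E : ℕ → ℕ → Set Ω := fun m k => {ω | y / 10 * (9 / 10) ^ m <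
    |Bi (T * ((k : ℝ) + 1) / 2 ^ m) ω - Bi (T * k / 2 ^ m) ω|} with hE
  have hsub : {ω | ∃ t, 0 ≤ t ∧ t ≤ T ∧ y < |Bi t ω|} ⊆
      N ∪ ⋃ m : ℕ, ⋃ k ∈ Finset.range (2 ^ m), E m k := by
    rintro ω ⟨t, ht0, htT, hlt⟩
    by_contra hcon
    simp only [mem_union, mem_iUnion, not_or, not_exists] at hcon
    have hc : Continuous fun t => Bi t ω := by
      by_contra h; exact hcon.1 h
    refine absurd (chaining (fun t => Bi t ω) hc (hB0 ω) hT hy ?_ t ht0 htT) (not_le.2 hlt)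
    intro m k hk
    exact not_lt.1 (hcon.2 m k (Finset.mem_range.2 hk))
  have hEb : ∀ m k, P (E m k) ≤ ENNReal.ofReal (C * (T / 2 ^ m) ^ b / (y / 10 * (9 / 10) ^ m) ^ (2 * b)) := by
    intro m k
    have hlt : T * (k : ℝ) / 2 ^ m < T * ((k : ℝ) + 1) / 2 ^ m := by
      gcongr; linarith
    have h1 := hBgauss (T * k / 2 ^ m) (T * ((k : ℝ) + 1) / 2 ^ m) (by positivity) hlt
    have h2 : T * ((k : ℝ) + 1) / 2 ^ m - T * k / 2 ^ m = T / 2 ^ m := by ring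
    rw [h2] at h1
    have h3 := hG (T / 2 ^ m) (by positivity) (y / 10 * (9 / 10) ^ m) (by positivity)
    have h4 : Measurable fun ω => Bi (T * ((k : ℝ) + 1) / 2 ^ m) ω - Bi (T * k / 2 ^ m) ω :=
      (hBmeas _).sub (hBmeas _)
    rw [← h1, Measure.map_apply h4 (measurableSet_lt measurable_const (by fun_prop))] at h3
    exact h3
  have hterm : ∀ m : ℕ, (2 ^ m : ℝ) * (C * (T / 2 ^ m) ^ b / (y / 10 * (9 / 10) ^ m) ^ (2 * b)) =
      C * 10 ^ (2 * b) * T ^ b / y ^ (2 * b) * θ ^ m := by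
    intro m
    have e1 : ((9 / 10 : ℝ) ^ m) ^ (2 * b) = (((81 / 100 : ℝ)) ^ b) ^ m := by
      have : (81 / 100 : ℝ) = (9 / 10) ^ 2 := by norm_num
      rw [this, ← pow_mul, ← pow_mul, ← pow_mul]
      congr 1
      ring
    have e2 : ((2 : ℝ) ^ m) ^ b = ((2 : ℝ) ^ b) ^ m := by
      rw [← pow_mul, mul_comm, pow_mul]
    have e3 : (100 / 162 : ℝ) ^ b = (2 ^ b * (81 / 100) ^ b)⁻¹ := by
      rw [← mul_pow, ← inv_pow]; norm_num
    rw [hθ, mul_pow (y / 10), div_pow T, div_pow y, e1, e2, e3, mul_pow, inv_pow, mul_pow ((2 : ℝ) ^ b)]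
    field_simp
  calc P {ω | ∃ t, 0 ≤ t ∧ t ≤ T ∧ y < |Bi t ω|}
      ≤ P N + P (⋃ m : ℕ, ⋃ k ∈ Finset.range (2 ^ m), E m k) :=
        (measure_mono hsub).trans (measure_union_le _ _)
    _ ≤ 0 + ∑' m : ℕ, ∑ k ∈ Finset.range (2 ^ m), P (E m k) := by
        rw [hN0]
        gcongr
        refine (measure_iUnion_le _).trans ?_
        gcongr with m
        exact measure_biUnion_finset_le _ _
    _ ≤ ∑' m : ℕ, ENNReal.ofReal (C * 10 ^ (2 * b) * T ^ b / y ^ (2 * b) * θ ^ m) := by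
        rw [zero_add]
        gcongr with m
        refine (Finset.sum_le_sum fun k _ => hEb m k).trans ?_
        rw [Finset.sum_const, Finset.card_range, nsmul_eq_mul, ← hterm m,
          ENNReal.ofReal_mul (by positivity)]
        gcongr
        rw [ENNReal.ofReal_pow (by norm_num)]
        simp
    _ = ENNReal.ofReal (C * 10 ^ (2 * b) * (1 - θ)⁻¹ * T ^ b / y ^ (2 * b)) := by
        rw [← ENNReal.ofReal_tsum_of_nonneg (fun m => by positivity)
          ((summable_geometric_of_lt_one hθ0 hθ1).mul_left _), tsum_mul_left,
          tsum_geometric_of_lt_one hθ0 hθ1]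
        congr 1
        ring

lemma bm_sup {Ω : Type*} [MeasurableSpace Ω] (P : Measure Ω)
    (Bi : ℝ → Ω → ℝ) (hB0 : ∀ ω, Bi 0 ω = 0) (hBmeas : ∀ t, Measurable (Bi t))
    (hBcont : ∀ᵐ ω ∂P, Continuous fun t => Bi t ω)
    (hBgauss : ∀ s t : ℝ, 0 ≤ s → s < t →
      P.map (fun ω => Bi t ω - Bi s ω) = gaussianReal 0 (Real.toNNReal (t - s)))
    (b : ℕ) (hb : 2 ≤ b) {s : ℝ} (hs : 0 < s) :
    ∃ C : ℝ, 0 ≤ C ∧ ∀ y : ℝ, 0 < y →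
      P {ω | ∃ t, 0 ≤ t ∧ y * Real.exp (s * t) < |Bi t ω|} ≤ ENNReal.ofReal (C / y ^ (2 * b)) := by
  obtain ⟨C, hC, h⟩ := bm_sup_finite P Bi hB0 hBmeas hBcont hBgauss b hb
  set ρ : ℝ := Real.exp (-(s * (2 * b))) with hρ
  have hρ0 : 0 < ρ := Real.exp_pos _
  have hρ1 : ρ < 1 := by
    rw [hρ, Real.exp_lt_one_iff]
    have : (0 : ℝ) < b := by exact_mod_cast (by omega : 0 < b)
    have : 0 < s * (2 * b) := by positivity
    linarith
  have hsum : Summable (fun n : ℕ => ((n : ℝ) + 1) ^ b * ρ ^ n) := by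
    have h1 := summable_pow_mul_geometric_of_norm_lt_one b (r := ρ) (by rwa [Real.norm_eq_abs, abs_of_pos hρ0])
    have h2 := ((summable_nat_add_iff 1).2 h1).mul_left ρ⁻¹
    refine h2.congr fun n => ?_
    rw [pow_succ]
    push_cast
    field_simp
  refine ⟨C * ∑' n : ℕ, ((n : ℝ) + 1) ^ b * ρ ^ n, ?_, ?_⟩
  · exact mul_nonneg hC (tsum_nonneg fun n => by positivity)
  intro y hy
  have hsub : {ω | ∃ t, 0 ≤ t ∧ y * Real.exp (s * t) < |Bi t ω|} ⊆
      ⋃ n : ℕ, {ω | ∃ t, 0 ≤ t ∧ t ≤ (n : ℝ) + 1 ∧ y * Real.exp (s * n) < |Bi t ω|} := by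
    rintro ω ⟨t, ht0, ht⟩
    refine mem_iUnion.2 ⟨⌊t⌋₊, t, ht0, (Nat.lt_floor_add_one t).le, lt_of_le_of_lt ?_ ht⟩
    have := Nat.floor_le ht0
    gcongr
  refine (measure_mono hsub).trans ((measure_iUnion_le _).trans ?_)
  calc ∑' n : ℕ, P {ω | ∃ t, 0 ≤ t ∧ t ≤ (n : ℝ) + 1 ∧ y * Real.exp (s * n) < |Bi t ω|}
      ≤ ∑' n : ℕ, ENNReal.ofReal (C / y ^ (2 * b) * (((n : ℝ) + 1) ^ b * ρ ^ n)) := by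
        gcongr with n
        refine (h ((n : ℝ) + 1) (y * Real.exp (s * n)) (by positivity) (by positivity)).trans ?_
        apply ENNReal.ofReal_le_ofReal
        apply le_of_eq
        have : Real.exp (s * n) ^ (2 * b) = (ρ ^ n)⁻¹ := by
          rw [← Real.exp_nat_mul, hρ, ← Real.exp_nat_mul, ← Real.exp_neg]
          congr 1
          push_cast
          ring
        rw [mul_pow, this]
        field_simp
    _ = _ := by
        rw [← ENNReal.ofReal_tsum_of_nonneg (fun n => by positivity) (hsum.mul_left _), tsum_mul_left]
        congr 1
        ring

/-! ### Part C: randomly weighted sums on the line -/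

lemma indep_lintegral {Ω : Type*} [MeasurableSpace Ω] (P : Measure Ω) [IsProbabilityMeasure P]
    {Y θ : Ω → ℝ} (hY : Measurable Y) (hθ : Measurable θ) (h : IndepFun Y θ P)
    {φ : ℝ × ℝ → ℝ≥0∞} (hφ : Measurable φ) :
    ∫⁻ ω, φ (Y ω, θ ω) ∂P = ∫⁻ ω, ∫⁻ y, φ (y, θ ω) ∂(P.map Y) ∂P := by
  have hYp : IsProbabilityMeasure (P.map Y) := Measure.isProbabilityMeasure_map hY.aemeasurable
  have hθp : IsProbabilityMeasure (P.map θ) := Measure.isProbabilityMeasure_map hθ.aemeasurable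
  have h1 := (indepFun_iff_map_prod_eq_prod_map_map hY.aemeasurable hθ.aemeasurable).1 h
  calc ∫⁻ ω, φ (Y ω, θ ω) ∂P = ∫⁻ z, φ z ∂(P.map fun ω => (Y ω, θ ω)) := by
        rw [lintegral_map hφ (hY.prodMk hθ)]
    _ = ∫⁻ t, ∫⁻ y, φ (y, t) ∂(P.map Y) ∂(P.map θ) := by
        rw [h1, lintegral_prod_symm' _ hφ]
    _ = _ := by
        rw [lintegral_map _ hθ]
        exact hφ.lintegral_prod_left'

lemma tail_prod {Ω : Type*} [MeasurableSpace Ω] (P : Measure Ω) [IsProbabilityMeasure P]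
    {Y θ : Ω → ℝ} (hY : Measurable Y) (hθ : Measurable θ) (h : IndepFun Y θ P)
    (hθ0 : ∀ ω, 0 < θ ω) (x : ℝ) :
    P {ω | x < Y ω * θ ω} = ∫⁻ ω, (P.map Y) (Ioi (x / θ ω)) ∂P := by
  have hS : MeasurableSet {z : ℝ × ℝ | x < z.1 * z.2} :=
    measurableSet_lt measurable_const (by fun_prop)
  have h1 := indep_lintegral P hY hθ h (φ := indicator {z : ℝ × ℝ | x < z.1 * z.2} 1)
    (measurable_one.indicator hS)
  have e1 : ∫⁻ ω, indicator {z : ℝ × ℝ | x < z.1 * z.2} (1 : ℝ × ℝ → ℝ≥0∞) (Y ω, θ ω) ∂P =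
      P {ω | x < Y ω * θ ω} := by
    have hm : Measurable fun ω => Y ω * θ ω := hY.mul hθ
    rw [← lintegral_indicator_one (measurableSet_lt measurable_const hm)]
    rfl
  rw [← e1, h1]
  refine lintegral_congr fun ω => ?_
  rw [← lintegral_indicator_one measurableSet_Ioi]
  refine lintegral_congr fun y => ?_
  simp only [indicator, mem_ofPred_eq, mem_Ioi, div_lt_iff₀ (hθ0 ω), Pi.one_apply]

/-- truncated moment of the product. -/
lemma trunc_prod {Ω : Type*} [MeasurableSpace Ω] (P : Measure Ω) [IsProbabilityMeasure P]
    {Y θ : Ω → ℝ} (hY : Measurable Y) (hθ : Measurable θ) (h : IndepFun Y θ P)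
    (hθ0 : ∀ ω, 0 < θ ω) (hθ1 : ∀ ω, θ ω ≤ 1) (hY0 : ∀ ω, 0 ≤ Y ω)
    {p K x₁ : ℝ} (hp : 1 ≤ p) (hK : 0 < K) (hx₁ : 0 < x₁)
    (hT : ∀ y, x₁ ≤ y → ∫⁻ z in Ioc 0 y, ENNReal.ofReal (z ^ p) ∂(P.map Y) ≤
      ENNReal.ofReal (K * y ^ p) * (P.map Y) (Ioi y)) {x : ℝ} (hx : x₁ ≤ x) :
    ∫⁻ ω, ENNReal.ofReal ((if Y ω * θ ω ≤ x then Y ω * θ ω else 0) ^ p) ∂P ≤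
      ENNReal.ofReal (K * x ^ p) * P {ω | x < Y ω * θ ω} := by
  have hx0 : 0 < x := hx₁.trans_le hx
  set S := {z : ℝ × ℝ | 0 < z.1 * z.2 ∧ z.1 * z.2 ≤ x} with hSdef
  have hm : Measurable fun z : ℝ × ℝ => z.1 * z.2 := by fun_prop
  have hS : MeasurableSet S :=
    (measurableSet_lt measurable_const hm).inter (measurableSet_le hm measurable_const)
  have hφ : Measurable (indicator S fun z : ℝ × ℝ => ENNReal.ofReal ((z.1 * z.2) ^ p)) :=
    Measurable.indicator (by fun_prop) hS
  have h1 := indep_lintegral P hY hθ h hφ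
  have e1 : ∀ ω, ENNReal.ofReal ((if Y ω * θ ω ≤ x then Y ω * θ ω else 0) ^ p) =
      indicator S (fun z : ℝ × ℝ => ENNReal.ofReal ((z.1 * z.2) ^ p)) (Y ω, θ ω) := by
    intro ω
    simp only [indicator, hSdef, mem_ofPred_eq]
    have hnn : 0 ≤ Y ω * θ ω := mul_nonneg (hY0 ω) (hθ0 ω).le
    by_cases hc : Y ω * θ ω ≤ x
    · rcases hnn.eq_or_lt with h0 | h0
      · rw [if_pos hc, if_neg (by rw [← h0]; simp), ← h0, Real.zero_rpow (by linarith)]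
        simp
      · rw [if_pos hc, if_pos ⟨h0, hc⟩]
    · rw [if_neg hc, if_neg (fun h => hc h.2), Real.zero_rpow (by linarith)]
      simp
  simp_rw [e1]
  rw [h1, tail_prod P hY hθ h hθ0, ← lintegral_const_mul' _ _ ENNReal.ofReal_ne_top]
  refine lintegral_mono fun ω => ?_
  have ht0 := hθ0 ω
  have ht1 := hθ1 ω
  set t := θ ω
  have hxt : x ≤ x / t := by
    rw [le_div_iff₀ ht0]; nlinarith
  have e2 : ∀ y, indicator S (fun z : ℝ × ℝ => ENNReal.ofReal ((z.1 * z.2) ^ p)) (y, t) =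
      indicator (Ioc 0 (x / t)) (fun z => ENNReal.ofReal (t ^ p) * ENNReal.ofReal (z ^ p)) y := by
    intro y
    have hiff : (0 < y * t ∧ y * t ≤ x) ↔ (0 < y ∧ y ≤ x / t) := by
      rw [le_div_iff₀ ht0, mul_pos_iff_of_pos_right ht0]
    simp only [indicator, hSdef, mem_ofPred_eq, mem_Ioc, hiff]
    split_ifs with hc
    · rw [← ENNReal.ofReal_mul (by positivity), Real.mul_rpow hc.1.le ht0.le, mul_comm]
    · rfl
  simp_rw [e2]
  rw [lintegral_indicator measurableSet_Ioc, lintegral_const_mul' _ _ ENNReal.ofReal_ne_top]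
  calc ENNReal.ofReal (t ^ p) * ∫⁻ z in Ioc 0 (x / t), ENNReal.ofReal (z ^ p) ∂(P.map Y)
      ≤ ENNReal.ofReal (t ^ p) * (ENNReal.ofReal (K * (x / t) ^ p) * (P.map Y) (Ioi (x / t))) := by
        gcongr
        exact hT _ (hx.trans hxt)
    _ = _ := by
        rw [← mul_assoc, ← ENNReal.ofReal_mul (by positivity)]
        congr 2
        rw [Real.div_rpow hx0.le ht0.le]
        field_simp

/-- Karamata for a law on the line. -/
lemma karamata_law (lam : Measure ℝ) [IsProbabilityMeasure lam] {g : ℝ → ℝ}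
    (hg : ∀ x, g x = lam.real (Ioi x)) (hpos : ∀ x, 0 < g x) {p v κ : ℝ} (hp : 1 ≤ p) (hv : 1 < v)
    (hκ : 1 < κ * v ^ p) (hev : ∀ᶠ x in atTop, κ * g x ≤ g (v * x)) :
    ∃ K x₁ : ℝ, 0 < K ∧ 0 < x₁ ∧ ∀ y, x₁ ≤ y →
      ∫⁻ z in Ioc 0 y, ENNReal.ofReal (z ^ p) ∂lam ≤ ENNReal.ofReal (K * y ^ p) * lam (Ioi y) := by
  have hanti : Antitone g := by
    intro x y hxy
    rw [hg, hg]
    exact measureReal_mono (Ioi_subset_Ioi hxy)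
  have hb : ∀ a y, 0 ≤ a → 0 < y → ∫⁻ z in Ioc a y, ENNReal.ofReal (z ^ p) ∂lam ≤
      ENNReal.ofReal (y ^ p) * lam (Ioi a) := by
    intro a y ha hy
    calc ∫⁻ z in Ioc a y, ENNReal.ofReal (z ^ p) ∂lam ≤ ∫⁻ z in Ioc a y, ENNReal.ofReal (y ^ p) ∂lam := by
          refine setLIntegral_mono' measurableSet_Ioc fun z hz => ?_
          apply ENNReal.ofReal_le_ofReal
          have : 0 ≤ z := ha.trans hz.1.le
          exact Real.rpow_le_rpow this hz.2 (by linarith)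
      _ = ENNReal.ofReal (y ^ p) * lam (Ioc a y) := by rw [setLIntegral_const]
      _ ≤ _ := by gcongr; exact Ioc_subset_Ioi_self
  have hfin : ∀ y, 0 < y → ∫⁻ z in Ioc 0 y, ENNReal.ofReal (z ^ p) ∂lam ≠ ⊤ := by
    intro y hy
    exact ne_top_of_le_ne_top (ENNReal.mul_ne_top ENNReal.ofReal_ne_top (measure_ne_top _ _)) (hb 0 y le_rfl hy)
  obtain ⟨K, x₁, hK, hx₁, h⟩ := karamata_induct hpos hanti (by linarith : 0 < p) hv hκ hev
    (fun y => (∫⁻ z in Ioc 0 y, ENNReal.ofReal (z ^ p) ∂lam).toReal)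
    (by
      intro y hy
      apply ENNReal.toReal_le_of_le_ofReal (by positivity)
      refine (hb 0 y le_rfl hy).trans ?_
      calc _ ≤ ENNReal.ofReal (y ^ p) * 1 := by gcongr; exact prob_le_one
        _ = _ := mul_one _)
    (by
      intro y hy
      have hvy : y ≤ v * y := by nlinarith
      have hvy0 : 0 < v * y := by nlinarith
      have e : Ioc 0 (v * y) = Ioc 0 y ∪ Ioc y (v * y) := (Ioc_union_Ioc_eq_Ioc hy.le hvy).symm
      rw [hg, measureReal_def]
      have e3 : (v * y) ^ p = (ENNReal.ofReal ((v * y) ^ p)).toReal :=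
        (ENNReal.toReal_ofReal (by positivity)).symm
      rw [e3, ← ENNReal.toReal_mul, ← ENNReal.toReal_add (hfin y hy)
        (ENNReal.mul_ne_top ENNReal.ofReal_ne_top (measure_ne_top _ _))]
      apply ENNReal.toReal_mono
      · exact ENNReal.add_ne_top.2 ⟨hfin y hy, ENNReal.mul_ne_top ENNReal.ofReal_ne_top (measure_ne_top _ _)⟩
      rw [e]
      refine (lintegral_union_le _ _ _).trans ?_
      gcongr
      exact hb y (v * y) hy.le hvy0)
  refine ⟨K, x₁, hK, hx₁, fun y hy => ?_⟩
  have hy0 := hx₁.trans_le hy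
  have h2 := h y hy
  rw [hg] at h2
  rw [← ENNReal.ofReal_toReal (hfin y hy0), ← ofReal_measureReal, ← ENNReal.ofReal_mul (by positivity)]
  exact ENNReal.ofReal_le_ofReal h2

/-- Tail of an infinite sum with arbitrary dependence. -/
lemma infinite_sum_tail {Ω : Type*} [MeasurableSpace Ω] (P : Measure Ω) [IsProbabilityMeasure P]
    (Z : ℕ → Ω → ℝ) (hZ : ∀ i, Measurable (Z i)) (hZ0 : ∀ i ω, 0 ≤ Z i ω) {p y : ℝ} (hp : 1 ≤ p)
    (hy : 0 < y) (m e : ℕ → ℝ) (hm : Summable m) (he : Summable e) (hm0 : ∀ i, 0 ≤ m i)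
    (he0 : ∀ i, 0 ≤ e i) (h1 : ∀ i, P.real {ω | y < Z i ω} ≤ m i)
    (h2 : ∀ i, ∫⁻ ω, ENNReal.ofReal ((if Z i ω ≤ y then Z i ω else 0) ^ p) ∂P ≤
      ENNReal.ofReal ((y * e i) ^ p)) :
    P.real {ω | ∃ N : ℕ, y < ∑ i ∈ Finset.range N, Z i ω} ≤ ∑' i, m i + (∑' i, e i) ^ p := by
  set W : ℕ → Ω → ℝ := fun i ω => if Z i ω ≤ y then Z i ω else 0 with hW
  have hWm : ∀ i, Measurable (W i) := fun i =>
    Measurable.ite (measurableSet_le (hZ i) measurable_const) (hZ i) measurable_const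
  have hW0 : ∀ i ω, 0 ≤ W i ω := by
    intro i ω
    simp only [hW]
    split_ifs
    · exact hZ0 i ω
    · exact le_rfl
  have hes : 0 ≤ ∑' i, e i := tsum_nonneg he0
  have hsub : {ω | ∃ N : ℕ, y < ∑ i ∈ Finset.range N, Z i ω} ⊆
      (⋃ i, {ω | y < Z i ω}) ∪ ⋃ N : ℕ, {ω | y ≤ ∑ i ∈ Finset.range N, W i ω} := by
    rintro ω ⟨N, hN⟩
    by_cases hc : ∃ i, y < Z i ω
    · exact Or.inl (mem_iUnion.2 hc)
    · push Not at hc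
      refine Or.inr (mem_iUnion.2 ⟨N, ?_⟩)
      have : ∀ i, W i ω = Z i ω := fun i => by simp only [hW]; rw [if_pos (hc i)]
      simp only [mem_ofPred_eq, this]
      exact hN.le
  have hp0 : ENNReal.ofReal p ≠ 0 := by simp; linarith
  have hLp : ∀ i, eLpNorm (W i) (ENNReal.ofReal p) P ≤ ENNReal.ofReal (y * e i) := by
    intro i
    rw [eLpNorm_eq_lintegral_rpow_enorm_toReal hp0 ENNReal.ofReal_ne_top,
      ENNReal.toReal_ofReal (by linarith)]
    have : ∀ ω, ‖W i ω‖ₑ ^ p = ENNReal.ofReal ((W i ω) ^ p) := by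
      intro ω
      rw [Real.enorm_eq_ofReal (hW0 i ω), ENNReal.ofReal_rpow_of_nonneg (hW0 i ω) (by linarith)]
    simp_rw [this]
    rw [one_div, ENNReal.rpow_inv_le_iff (by linarith), ENNReal.ofReal_rpow_of_nonneg
      (mul_nonneg hy.le (he0 i)) (by linarith)]
    exact h2 i
  have hN : ∀ N : ℕ, P {ω | y ≤ ∑ i ∈ Finset.range N, W i ω} ≤ ENNReal.ofReal ((∑' i, e i) ^ p) := by
    intro N
    have hmeas : AEStronglyMeasurable (∑ i ∈ Finset.range N, W i) P :=
      Finset.aestronglyMeasurable_sum _ fun i _ => (hWm i).aestronglyMeasurable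
    have k1 := mul_meas_ge_le_pow_eLpNorm' P hp0 ENNReal.ofReal_ne_top hmeas (ENNReal.ofReal y)
    rw [ENNReal.toReal_ofReal (by linarith)] at k1
    have k2 : eLpNorm (∑ i ∈ Finset.range N, W i) (ENNReal.ofReal p) P ≤ ENNReal.ofReal (y * ∑' i, e i) := by
      refine (eLpNorm_sum_le (fun i _ => (hWm i).aestronglyMeasurable) (by
        rw [← ENNReal.ofReal_one]; exact ENNReal.ofReal_le_ofReal hp)).trans ?_
      refine (Finset.sum_le_sum fun i _ => hLp i).trans ?_
      rw [← ENNReal.ofReal_sum_of_nonneg (fun i _ => mul_nonneg hy.le (he0 i)), ← Finset.mul_sum]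
      apply ENNReal.ofReal_le_ofReal
      gcongr
      exact he.sum_le_tsum _ (fun i _ => he0 i)
    have k3 : {ω | y ≤ ∑ i ∈ Finset.range N, W i ω} ⊆
        {ω | ENNReal.ofReal y ≤ ‖(∑ i ∈ Finset.range N, W i) ω‖ₑ} := by
      intro ω hω
      simp only [mem_ofPred_eq, Finset.sum_apply] at hω ⊢
      rw [Real.enorm_eq_ofReal (hy.le.trans hω)]
      exact ENNReal.ofReal_le_ofReal hω
    have k4 : ENNReal.ofReal y ^ p * P {ω | y ≤ ∑ i ∈ Finset.range N, W i ω} ≤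
        ENNReal.ofReal y ^ p * ENNReal.ofReal ((∑' i, e i) ^ p) := by
      calc _ ≤ ENNReal.ofReal y ^ p * P {ω | ENNReal.ofReal y ≤ ‖(∑ i ∈ Finset.range N, W i) ω‖ₑ} := by
            gcongr
        _ ≤ _ := k1
        _ ≤ (ENNReal.ofReal (y * ∑' i, e i)) ^ p := by gcongr
        _ = _ := by
          rw [ENNReal.ofReal_mul hy.le, ENNReal.mul_rpow_of_nonneg _ _ (by linarith),
            ENNReal.ofReal_rpow_of_nonneg hes (by linarith)]
    have hyp : ENNReal.ofReal y ^ p ≠ 0 := by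
      rw [ENNReal.ofReal_rpow_of_pos hy]; simp; positivity
    have hyt : ENNReal.ofReal y ^ p ≠ ⊤ := by
      rw [ENNReal.ofReal_rpow_of_pos hy]; simp
    exact (ENNReal.mul_le_mul_iff_right hyp hyt).1 k4
  have hU : P (⋃ N : ℕ, {ω | y ≤ ∑ i ∈ Finset.range N, W i ω}) ≤ ENNReal.ofReal ((∑' i, e i) ^ p) := by
    have hmono : Monotone fun N : ℕ => {ω | y ≤ ∑ i ∈ Finset.range N, W i ω} := by
      intro a b hab ω hω
      simp only [mem_ofPred_eq] at hω ⊢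
      refine hω.trans (Finset.sum_le_sum_of_subset_of_nonneg (Finset.range_mono hab) fun i _ _ => hW0 i ω)
    rw [hmono.measure_iUnion]
    exact iSup_le hN
  have hV : P (⋃ i, {ω | y < Z i ω}) ≤ ENNReal.ofReal (∑' i, m i) := by
    refine (measure_iUnion_le _).trans ?_
    rw [ENNReal.ofReal_tsum_of_nonneg hm0 hm]
    gcongr with i
    rw [← ofReal_measureReal]
    exact ENNReal.ofReal_le_ofReal (h1 i)
  have hfinal : P {ω | ∃ N : ℕ, y < ∑ i ∈ Finset.range N, Z i ω} ≤
      ENNReal.ofReal (∑' i, m i + (∑' i, e i) ^ p) := by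
    rw [ENNReal.ofReal_add (tsum_nonneg hm0) (by positivity)]
    exact (measure_mono hsub).trans ((measure_union_le _ _).trans (add_le_add hV hU))
  exact ENNReal.toReal_le_of_le_ofReal (add_nonneg (tsum_nonneg hm0) (by positivity)) hfinal

lemma two_big (z : ℕ → ℝ) (n : ℕ) {y δ : ℝ} (hδ : 0 < δ) (hyδ : 0 ≤ y - δ)
    (h : y < ∑ i ∈ Finset.range n, z i) :
    (∃ i ∈ Finset.range n, y - δ < z i) ∨
      ∃ ij ∈ (Finset.range n).offDiag, δ / (n + 1) < z ij.1 ∧ δ / (n + 1) < z ij.2 := by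
  by_contra hcon
  push Not at hcon
  obtain ⟨h1, h2⟩ := hcon
  have hne : (Finset.range n).Nonempty := by
    by_contra hc
    rw [Finset.not_nonempty_iff_eq_empty] at hc
    rw [hc, Finset.sum_empty] at h
    linarith
  obtain ⟨j, hj, hmax⟩ := Finset.exists_max_image (Finset.range n) z hne
  have h3 : ∀ i ∈ (Finset.range n).erase j, z i ≤ δ / (n + 1) := by
    intro i hi
    rw [Finset.mem_erase] at hi
    by_contra hc
    push Not at hc
    have := h2 (i, j) (Finset.mem_offDiag.2 ⟨hi.2, hj, hi.1⟩) hc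
    have := hmax i hi.2
    linarith
  have h4 := Finset.sum_le_card_nsmul _ _ _ h3
  rw [← Finset.add_sum_erase _ _ hj] at h
  rw [nsmul_eq_mul] at h4
  have h5 : (((Finset.range n).erase j).card : ℝ) ≤ n := by
    have := Finset.card_le_card (Finset.erase_subset j (Finset.range n))
    rw [Finset.card_range] at this
    exact_mod_cast this
  have h6 : (((Finset.range n).erase j).card : ℝ) * (δ / (n + 1)) ≤ δ := by
    rw [mul_div_assoc', div_le_iff₀ (by positivity)]
    nlinarith
  have := h1 j hj
  linarith

lemma bonferroni {Ω : Type*} [MeasurableSpace Ω] (P : Measure Ω) [IsProbabilityMeasure P]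
    (E : ℕ → Set Ω) (hE : ∀ i, MeasurableSet (E i)) (n : ℕ) :
    ∑ i ∈ Finset.range n, P.real (E i) ≤ P.real (⋃ i ∈ Finset.range n, E i) +
      ∑ i ∈ Finset.range n, ∑ j ∈ Finset.range i, P.real (E i ∩ E j) := by
  induction n with
  | zero => simp
  | succ n ih =>
    rw [Finset.sum_range_succ, Finset.sum_range_succ]
    have hU : (⋃ i ∈ Finset.range (n + 1), E i) = (⋃ i ∈ Finset.range n, E i) ∪ E n := by
      rw [Finset.range_add_one, Finset.set_biUnion_insert, union_comm]
    rw [hU]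
    have h1 := measureReal_union_add_inter (μ := P) (s := ⋃ i ∈ Finset.range n, E i) (hE n)
      (measure_ne_top _ _) (measure_ne_top _ _)
    have h2 : P.real ((⋃ i ∈ Finset.range n, E i) ∩ E n) ≤ ∑ j ∈ Finset.range n, P.real (E n ∩ E j) := by
      have : (⋃ i ∈ Finset.range n, E i) ∩ E n = ⋃ j ∈ Finset.range n, (E n ∩ E j) := by
        rw [inter_comm, inter_iUnion₂]
      rw [this]
      exact measureReal_biUnion_finset_le _ _
    linarith

/-! ### Part D: the abstract one-dimensional theorem -/

/-- Data for a randomly weighted sum with constants for the tail function. -/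
structure WSum {Ω : Type*} [MeasurableSpace Ω] (P : Measure Ω) (lam : Measure ℝ) (g : ℝ → ℝ)
    (Y θ : ℕ → Ω → ℝ) (p q C x₀ K x₁ : ℝ) : Prop where
  hY : ∀ i, Measurable (Y i)
  hθ : ∀ i, Measurable (θ i)
  hY0 : ∀ i ω, 0 ≤ Y i ω
  hlaw : ∀ i, P.map (Y i) = lam
  hθ0 : ∀ i ω, 0 < θ i ω
  hθ1 : ∀ i ω, θ i ω ≤ 1
  hind : ∀ i, IndepFun (Y i) (θ i) P
  hg : ∀ x, g x = lam.real (Ioi x)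
  hpos : ∀ x, 0 < g x
  hp : 1 ≤ p
  hq : 0 < q
  hC : 0 < C
  hx₀ : 0 < x₀
  pot : ∀ x, x₀ ≤ x → ∀ s, 1 ≤ s → g (s * x) ≤ C * s ^ (-q) * g x
  hK : 0 < K
  hx₁ : 0 < x₁
  kar : ∀ y, x₁ ≤ y → ∫⁻ z in Ioc 0 y, ENNReal.ofReal (z ^ p) ∂lam ≤
    ENNReal.ofReal (K * y ^ p) * lam (Ioi y)
  hsum : Summable fun i => (∫ ω, θ i ω ^ q ∂P) ^ (1 / p)
  hH1 : ∀ η, 0 < η → ∃ b, 0 < b ∧ b < 1 ∧ ∀ᶠ x in atTop, g (b * x) ≤ (1 + η) * g x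
  hHD : ∀ s, ∃ c, 0 < c ∧ ∀ᶠ x in atTop, c * g x ≤ g (s * x)
  hQ : ∀ i j, i ≠ j → Tendsto (fun x => P.real {ω | x < Y i ω ∧ x < Y j ω} / g x) atTop (𝓝 0)

set_option linter.unusedSectionVars false

namespace WSum

variable {Ω : Type*} [MeasurableSpace Ω] {P : Measure Ω} [IsProbabilityMeasure P]
  {lam : Measure ℝ} [IsProbabilityMeasure lam] {g : ℝ → ℝ} {Y θ : ℕ → Ω → ℝ}
  {p q C x₀ K x₁ : ℝ}

lemma anti (h : WSum P lam g Y θ p q C x₀ K x₁) : Antitone g := by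
  intro x y hxy
  rw [h.hg, h.hg]
  exact measureReal_mono (Ioi_subset_Ioi hxy)

lemma pow_nonneg (h : WSum P lam g Y θ p q C x₀ K x₁) (i : ℕ) (ω : Ω) : 0 ≤ θ i ω ^ q :=
  Real.rpow_nonneg (h.hθ0 i ω).le _

lemma pow_le_one (h : WSum P lam g Y θ p q C x₀ K x₁) (i : ℕ) (ω : Ω) : θ i ω ^ q ≤ 1 :=
  Real.rpow_le_one (h.hθ0 i ω).le (h.hθ1 i ω) h.hq.le

lemma integ (h : WSum P lam g Y θ p q C x₀ K x₁) (i : ℕ) : Integrable (fun ω => θ i ω ^ q) P := by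
  refine Integrable.of_bound (C := 1) ((h.hθ i).pow_const q).aestronglyMeasurable ?_
  refine Eventually.of_forall fun ω => ?_
  rw [Real.norm_of_nonneg (h.pow_nonneg i ω)]
  exact h.pow_le_one i ω

lemma a_nonneg (h : WSum P lam g Y θ p q C x₀ K x₁) (i : ℕ) : 0 ≤ ∫ ω, θ i ω ^ q ∂P :=
  integral_nonneg (h.pow_nonneg i)

lemma a_le_one (h : WSum P lam g Y θ p q C x₀ K x₁) (i : ℕ) : ∫ ω, θ i ω ^ q ∂P ≤ 1 := by
  have := integral_mono (h.integ i) (integrable_const (1 : ℝ)) (h.pow_le_one i)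
  simpa using this

lemma a_le (h : WSum P lam g Y θ p q C x₀ K x₁) (i : ℕ) :
    ∫ ω, θ i ω ^ q ∂P ≤ (∫ ω, θ i ω ^ q ∂P) ^ (1 / p) := by
  have hp := h.hp
  have h1 : 1 / p ≤ 1 := by rw [div_le_one (by linarith)]; exact hp
  have := Real.rpow_le_rpow_of_exponent_ge_of_imp (h.a_nonneg i) (h.a_le_one i) h1
    (fun _ hh => by exfalso; have : 0 < 1 / p := by positivity
                    linarith)
  simpa using this

lemma a_summable (h : WSum P lam g Y θ p q C x₀ K x₁) : Summable fun i => ∫ ω, θ i ω ^ q ∂P :=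
  Summable.of_nonneg_of_le h.a_nonneg h.a_le h.hsum

lemma lam_eq (h : WSum P lam g Y θ p q C x₀ K x₁) (x : ℝ) : lam (Ioi x) = ENNReal.ofReal (g x) := by
  rw [h.hg, ofReal_measureReal]

lemma prodm (h : WSum P lam g Y θ p q C x₀ K x₁) (i : ℕ) : Measurable fun ω => Y i ω * θ i ω :=
  (h.hY i).mul (h.hθ i)

lemma tail (h : WSum P lam g Y θ p q C x₀ K x₁) (i : ℕ) (x : ℝ) :
    P {ω | x < Y i ω * θ i ω} = ∫⁻ ω, ENNReal.ofReal (g (x / θ i ω)) ∂P := by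
  rw [tail_prod P (h.hY i) (h.hθ i) (h.hind i) (h.hθ0 i), h.hlaw]
  simp_rw [h.lam_eq]

lemma le_div (h : WSum P lam g Y θ p q C x₀ K x₁) (i : ℕ) (ω : Ω) {x : ℝ} (hx : 0 ≤ x) :
    x ≤ x / θ i ω := by
  rw [le_div_iff₀ (h.hθ0 i ω)]
  nlinarith [h.hθ1 i ω]

lemma mu_le (h : WSum P lam g Y θ p q C x₀ K x₁) (i : ℕ) {x : ℝ} (hx : x₀ ≤ x) :
    P.real {ω | x < Y i ω * θ i ω} ≤ C * g x * ∫ ω, θ i ω ^ q ∂P := by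
  have hC := h.hC
  have hgx := h.hpos x
  apply ENNReal.toReal_le_of_le_ofReal (mul_nonneg (by positivity) (h.a_nonneg i))
  rw [h.tail, ← integral_const_mul, ofReal_integral_eq_lintegral_ofReal ((h.integ i).const_mul _)
    (Eventually.of_forall fun ω => mul_nonneg (by positivity) (h.pow_nonneg i ω))]
  refine lintegral_mono fun ω => ENNReal.ofReal_le_ofReal ?_
  have ht0 := h.hθ0 i ω
  have h1 := h.pot x hx (1 / θ i ω) (by rw [le_div_iff₀ ht0]; linarith [h.hθ1 i ω])
  have e1 : 1 / θ i ω * x = x / θ i ω := by ring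
  have e2 : (1 / θ i ω) ^ (-q) = θ i ω ^ q := by
    rw [one_div, Real.inv_rpow ht0.le, Real.rpow_neg ht0.le, inv_inv]
  rw [e1, e2] at h1
  linarith

lemma mu_cmp (h : WSum P lam g Y θ p q C x₀ K x₁) {b η X : ℝ} (hη : 0 < η) (hX : 0 < X)
    (hb : ∀ x, X ≤ x → g (b * x) ≤ (1 + η) * g x) (i : ℕ) {x : ℝ} (hx : X ≤ x) :
    P.real {ω | b * x < Y i ω * θ i ω} ≤ (1 + η) * P.real {ω | x < Y i ω * θ i ω} := by
  rw [measureReal_def, measureReal_def, h.tail, h.tail]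
  have e : (1 + η) = (ENNReal.ofReal (1 + η)).toReal := (ENNReal.toReal_ofReal (by linarith)).symm
  rw [e, ← ENNReal.toReal_mul]
  apply ENNReal.toReal_mono
  · rw [← h.tail]
    exact ENNReal.mul_ne_top ENNReal.ofReal_ne_top (measure_ne_top _ _)
  rw [← lintegral_const_mul' _ _ ENNReal.ofReal_ne_top]
  refine lintegral_mono fun ω => ?_
  rw [← ENNReal.ofReal_mul (by linarith)]
  apply ENNReal.ofReal_le_ofReal
  have := hb (x / θ i ω) (hx.trans (h.le_div i ω (by linarith)))
  rwa [← mul_div_assoc] at this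

lemma mu_zero (h : WSum P lam g Y θ p q C x₀ K x₁) :
    ∃ c, 0 < c ∧ ∀ᶠ x in atTop, c * g x ≤ P.real {ω | x < Y 0 ω * θ 0 ω} := by
  have hU : (⋃ n : ℕ, {ω | 1 / ((n : ℝ) + 1) < θ 0 ω}) = univ := by
    rw [eq_univ_iff_forall]
    intro ω
    obtain ⟨n, hn⟩ := exists_nat_one_div_lt (h.hθ0 0 ω)
    exact mem_iUnion.2 ⟨n, hn⟩
  have hne : ∃ n : ℕ, 0 < P {ω | 1 / ((n : ℝ) + 1) < θ 0 ω} := by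
    by_contra hc
    push Not at hc
    have : P (⋃ n : ℕ, {ω | 1 / ((n : ℝ) + 1) < θ 0 ω}) = 0 :=
      measure_iUnion_null fun n => le_antisymm (hc n) bot_le
    rw [hU, measure_univ] at this
    exact one_ne_zero this
  obtain ⟨n, hn⟩ := hne
  set S := {ω | 1 / ((n : ℝ) + 1) < θ 0 ω} with hS
  have hSm : MeasurableSet S := measurableSet_lt measurable_const (h.hθ 0)
  obtain ⟨c, hc, hev⟩ := h.hHD (n + 1)
  have hPS : 0 < P.real S := ENNReal.toReal_pos hn.ne' (measure_ne_top _ _)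
  refine ⟨c * P.real S, by positivity, ?_⟩
  filter_upwards [hev, eventually_gt_atTop 0] with x hx hx0
  have h1 : ENNReal.ofReal (g ((n + 1) * x)) * P S ≤ P {ω | x < Y 0 ω * θ 0 ω} := by
    rw [h.tail, ← setLIntegral_const]
    refine (setLIntegral_mono' hSm fun ω hω => ?_).trans (setLIntegral_le_lintegral S _)
    apply ENNReal.ofReal_le_ofReal
    apply h.anti
    rw [div_le_iff₀ (h.hθ0 0 ω)]
    have : 1 < ((n : ℝ) + 1) * θ 0 ω := by
      have := hω
      rw [hS, mem_ofPred_eq, div_lt_iff₀ (by positivity)] at this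
      linarith
    nlinarith
  have h2 := ENNReal.toReal_mono (measure_ne_top _ _) h1
  rw [ENNReal.toReal_mul, ENNReal.toReal_ofReal (h.hpos _).le] at h2
  change _ ≤ P.real _ at h2
  change g _ * P.real S ≤ _ at h2
  nlinarith

lemma mu_summable (h : WSum P lam g Y θ p q C x₀ K x₁) {x : ℝ} (hx : x₀ ≤ x) :
    Summable fun i => P.real {ω | x < Y i ω * θ i ω} :=
  Summable.of_nonneg_of_le (fun _ => measureReal_nonneg) (fun i => h.mu_le i hx)
    (h.a_summable.mul_left _)

/-- tail part of the sum -/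
lemma tail_sum (h : WSum P lam g Y θ p q C x₀ K x₁) (n : ℕ) {y : ℝ} (hy0 : x₀ ≤ y) (hy1 : x₁ ≤ y) :
    P.real {ω | ∃ N : ℕ, y < ∑ i ∈ Finset.range N, Y (i + n) ω * θ (i + n) ω} ≤
      C * g y * (∑' i, ∫ ω, θ (i + n) ω ^ q ∂P) +
        K * C * g y * (∑' i, (∫ ω, θ (i + n) ω ^ q ∂P) ^ (1 / p)) ^ p := by
  have hC := h.hC
  have hK := h.hK
  have hgy := h.hpos y
  have hp := h.hp
  have hy : 0 < y := h.hx₀.trans_le hy0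
  have hpp : 0 < p := by linarith
  have hs1 : Summable fun i => ∫ ω, θ (i + n) ω ^ q ∂P := (summable_nat_add_iff n).2 h.a_summable
  have hs2 : Summable fun i => (∫ ω, θ (i + n) ω ^ q ∂P) ^ (1 / p) :=
    (summable_nat_add_iff n).2 h.hsum
  have hn2 : ∀ i, 0 ≤ (∫ ω, θ i ω ^ q ∂P) ^ (1 / p) := fun i => Real.rpow_nonneg (h.a_nonneg i) _
  have key := infinite_sum_tail P (fun i ω => Y (i + n) ω * θ (i + n) ω) (fun i => h.prodm (i + n))
    (fun i ω => mul_nonneg (h.hY0 _ ω) (h.hθ0 _ ω).le) hp hy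
    (fun i => C * g y * ∫ ω, θ (i + n) ω ^ q ∂P)
    (fun i => (K * C * g y) ^ (1 / p) * (∫ ω, θ (i + n) ω ^ q ∂P) ^ (1 / p))
    (hs1.mul_left _) (hs2.mul_left _)
    (fun i => mul_nonneg (by positivity) (h.a_nonneg _))
    (fun i => mul_nonneg (by positivity) (hn2 _))
    (fun i => h.mu_le _ hy0)
    (by
      intro i
      refine (trunc_prod P (h.hY _) (h.hθ _) (h.hind _) (h.hθ0 _) (h.hθ1 _) (h.hY0 _) hp hK h.hx₁
        (by rw [h.hlaw]; exact h.kar) hy1).trans ?_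
      rw [← ofReal_measureReal, ← ENNReal.ofReal_mul (by positivity)]
      apply ENNReal.ofReal_le_ofReal
      have e : (y * ((K * C * g y) ^ (1 / p) * (∫ ω, θ (i + n) ω ^ q ∂P) ^ (1 / p))) ^ p =
          y ^ p * (K * C * g y * ∫ ω, θ (i + n) ω ^ q ∂P) := by
        rw [← Real.mul_rpow (by positivity) (h.a_nonneg _), Real.mul_rpow hy.le
          (Real.rpow_nonneg (mul_nonneg (by positivity) (h.a_nonneg _)) _), ← Real.rpow_mul
          (mul_nonneg (by positivity) (h.a_nonneg _)), one_div_mul_cancel hpp.ne', Real.rpow_one]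
      rw [e]
      have := mul_le_mul_of_nonneg_left (h.mu_le (i + n) hy0) (by positivity : 0 ≤ K * y ^ p)
      linarith)
  rw [tsum_mul_left, tsum_mul_left, Real.mul_rpow (by positivity) (tsum_nonneg fun i => hn2 _),
    ← Real.rpow_mul (by positivity), one_div_mul_cancel hpp.ne', Real.rpow_one] at key
  exact key

/-- pairs are negligible -/
lemma pair_negl (h : WSum P lam g Y θ p q C x₀ K x₁) {s : ℝ} (hs : 0 < s) {i j : ℕ} (hij : i ≠ j) :
    Tendsto (fun x => P.real {ω | s * x < Y i ω * θ i ω ∧ s * x < Y j ω * θ j ω} / g x)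
      atTop (𝓝 0) := by
  obtain ⟨c, hc, hev⟩ := h.hHD s⁻¹
  have hev2 : ∀ᶠ x in atTop, c * g (s * x) ≤ g x := by
    have ht : Tendsto (fun x => s * x) atTop atTop := tendsto_id.const_mul_atTop hs
    filter_upwards [ht.eventually hev] with x hx
    rwa [inv_mul_cancel_left₀ hs.ne'] at hx
  have h1 := ((h.hQ i j hij).comp ((tendsto_id (α := ℝ)).const_mul_atTop hs)).const_mul c⁻¹
  rw [mul_zero] at h1
  refine squeeze_zero' (Eventually.of_forall fun x => div_nonneg measureReal_nonneg (h.hpos x).le)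
    ?_ h1
  filter_upwards [hev2, eventually_gt_atTop 0] with x hx hx0
  simp only [Function.comp, id]
  have hsub : {ω | s * x < Y i ω * θ i ω ∧ s * x < Y j ω * θ j ω} ⊆
      {ω | s * x < Y i ω ∧ s * x < Y j ω} := by
    intro ω hω
    have hy1 := h.hY0 i ω
    have hy2 := h.hY0 j ω
    have t1 := h.hθ1 i ω
    have t2 := h.hθ1 j ω
    exact ⟨by nlinarith [hω.1], by nlinarith [hω.2]⟩
  have hm := measureReal_mono (μ := P) hsub
  have hg1 := h.hpos x
  have hg2 := h.hpos (s * x)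
  rw [div_le_iff₀ hg1]
  calc _ ≤ P.real {ω | s * x < Y i ω ∧ s * x < Y j ω} := hm
    _ = c⁻¹ * (P.real {ω | s * x < Y i ω ∧ s * x < Y j ω} / g (s * x)) * (c * g (s * x)) := by
        field_simp
    _ ≤ _ := by
        gcongr
end WSum

namespace WSum

variable {Ω : Type*} [MeasurableSpace Ω] {P : Measure Ω} [IsProbabilityMeasure P]
  {lam : Measure ℝ} [IsProbabilityMeasure lam] {g : ℝ → ℝ} {Y θ : ℕ → Ω → ℝ}
  {p q C x₀ K x₁ : ℝ}

lemma scale_ub (h : WSum P lam g Y θ p q C x₀ K x₁) {s : ℝ} (hs : 0 < s) :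
    ∃ D, 0 < D ∧ ∀ᶠ x in atTop, g (s * x) ≤ D * g x := by
  obtain ⟨c, hc, hev⟩ := h.hHD s⁻¹
  refine ⟨c⁻¹, by positivity, ?_⟩
  have ht : Tendsto (fun x => s * x) atTop atTop := tendsto_id.const_mul_atTop hs
  filter_upwards [ht.eventually hev] with x hx
  rw [inv_mul_cancel_left₀ hs.ne'] at hx
  rw [inv_mul_eq_div, le_div_iff₀ hc]
  linarith

lemma ev_le_of_tendsto (h : WSum P lam g Y θ p q C x₀ K x₁) {f : ℝ → ℝ}
    (hf : Tendsto (fun x => f x / g x) atTop (𝓝 0)) {η : ℝ} (hη : 0 < η) :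
    ∀ᶠ x in atTop, f x ≤ η * g x := by
  filter_upwards [hf.eventually (gt_mem_nhds hη)] with x hx
  rw [div_lt_iff₀ (h.hpos x)] at hx
  exact hx.le

lemma upper (h : WSum P lam g Y θ p q C x₀ K x₁) (R : ℝ → Set Ω) (E : ℝ → ℝ → Set Ω)
    (hE : ∀ ε, 0 < ε → Tendsto (fun x => P.real (E ε x) / g x) atTop (𝓝 0))
    (hup : ∀ ε, 0 < ε → ε < 1 → ∀ᶠ x in atTop,
      R x ⊆ E ε x ∪ {ω | ∃ N : ℕ, (1 - ε) * x < ∑ i ∈ Finset.range N, Y i ω * θ i ω})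
    {η : ℝ} (hη : 0 < η) :
    ∀ᶠ x in atTop, P.real (R x) ≤
      (1 + η) * (∑' i, P.real {ω | x < Y i ω * θ i ω}) + 3 * η * g x := by
  obtain ⟨b, hb0, hb1, hb⟩ := h.hH1 η hη
  obtain ⟨X₀, hX₀⟩ := eventually_atTop.1 hb
  set X := max X₀ 1 with hX
  have hXpos : 0 < X := lt_of_lt_of_le one_pos (le_max_right _ _)
  have hXb : ∀ x, X ≤ x → g (b * x) ≤ (1 + η) * g x := fun x hx =>
    hX₀ x ((le_max_left _ _).trans hx)
  set ε := (1 - b) / 3 with hε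
  have hε0 : 0 < ε := by rw [hε]; linarith
  have hε1 : ε < 1 := by rw [hε]; linarith
  obtain ⟨D, hD, hDev⟩ := h.scale_ub hε0
  have hp := h.hp
  have hC := h.hC
  have hK := h.hK
  -- choice of n
  have hlim : Tendsto (fun n : ℕ => C * D * (∑' i, ∫ ω, θ (i + n) ω ^ q ∂P) +
        K * C * D * (∑' i, (∫ ω, θ (i + n) ω ^ q ∂P) ^ (1 / p)) ^ p) atTop (𝓝 0) := by
    have t1 := tendsto_sum_nat_add (fun i => ∫ ω, θ i ω ^ q ∂P)
    have t2 := tendsto_sum_nat_add (fun i => (∫ ω, θ i ω ^ q ∂P) ^ (1 / p))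
    have t3 := t2.rpow_const (p := p) (Or.inr (by linarith))
    rw [Real.zero_rpow (by linarith)] at t3
    have := (t1.const_mul (C * D)).add (t3.const_mul (K * C * D))
    simpa using this
  obtain ⟨n, hn⟩ := (hlim.eventually (gt_mem_nhds hη)).exists
  have hpairs : Tendsto (fun x => (∑ ij ∈ (Finset.range n).offDiag,
      P.real {ω | ε / (n + 1) * x < Y ij.1 ω * θ ij.1 ω ∧ ε / (n + 1) * x < Y ij.2 ω * θ ij.2 ω}) / g x)
      atTop (𝓝 0) := by
    simp_rw [Finset.sum_div]
    have := tendsto_finsetSum (Finset.range n).offDiag (fun ij hij =>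
      h.pair_negl (s := ε / (n + 1)) (by positivity) (Finset.mem_offDiag.1 hij).2.2)
    simpa using this
  have hεx : Tendsto (fun x => ε * x) atTop atTop := tendsto_id.const_mul_atTop hε0
  filter_upwards [h.ev_le_of_tendsto (hE ε hε0) hη, h.ev_le_of_tendsto hpairs hη, hup ε hε0 hε1,
    hDev, hεx.eventually_ge_atTop x₀, hεx.eventually_ge_atTop x₁, eventually_ge_atTop X,
    eventually_ge_atTop x₀] with x k1 k2 k3 k4 k5 k6 k7 k8
  have hx0 : 0 < x := hXpos.trans_le k7
  have hgx := h.hpos x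
  have hsub : R x ⊆ E ε x ∪ ((⋃ i ∈ Finset.range n, {ω | b * x < Y i ω * θ i ω}) ∪
      ((⋃ ij ∈ (Finset.range n).offDiag,
      {ω | ε / (n + 1) * x < Y ij.1 ω * θ ij.1 ω ∧ ε / (n + 1) * x < Y ij.2 ω * θ ij.2 ω}) ∪
      {ω | ∃ N : ℕ, ε * x < ∑ i ∈ Finset.range N, Y (i + n) ω * θ (i + n) ω})) := by
    intro ω hω
    rcases k3 hω with h1 | ⟨N, hN⟩
    · exact Or.inl h1
    right
    have hZ0 : ∀ i, 0 ≤ Y i ω * θ i ω := fun i => mul_nonneg (h.hY0 _ _) (h.hθ0 _ _).le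
    by_cases hc : ε * x < ∑ i ∈ Finset.range N, Y (i + n) ω * θ (i + n) ω
    · exact Or.inr (Or.inr ⟨N, hc⟩)
    push Not at hc
    have hle : ∑ i ∈ Finset.range N, Y i ω * θ i ω ≤ ∑ i ∈ Finset.range (n + N), Y i ω * θ i ω :=
      Finset.sum_le_sum_of_subset_of_nonneg (Finset.range_mono (by omega)) fun i _ _ => hZ0 i
    rw [Finset.sum_range_add] at hle
    have e1 : ∑ i ∈ Finset.range N, Y (n + i) ω * θ (n + i) ω =
        ∑ i ∈ Finset.range N, Y (i + n) ω * θ (i + n) ω := by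
      refine Finset.sum_congr rfl fun i _ => ?_
      rw [add_comm]
    rw [e1] at hle
    have h2 : (1 - 2 * ε) * x < ∑ i ∈ Finset.range n, Y i ω * θ i ω := by nlinarith
    have e2 : (1 - 2 * ε) * x - ε * x = b * x := by rw [hε]; ring
    rcases two_big (fun i => Y i ω * θ i ω) n (δ := ε * x) (by positivity)
      (by rw [e2]; positivity) h2 with ⟨i, hi, h3⟩ | ⟨ij, hij, h3, h4⟩
    · left
      rw [e2] at h3
      exact mem_biUnion hi h3
    · right; left
      have e3 : ε * x / (n + 1) = ε / (n + 1) * x := by ring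
      rw [e3] at h3 h4
      exact mem_biUnion hij ⟨h3, h4⟩
  have m1 : P.real (⋃ i ∈ Finset.range n, {ω | b * x < Y i ω * θ i ω}) ≤
      (1 + η) * (∑' i, P.real {ω | x < Y i ω * θ i ω}) := by
    refine (measureReal_biUnion_finset_le _ _).trans ?_
    refine (Finset.sum_le_sum fun i _ => h.mu_cmp hη hXpos hXb i k7).trans ?_
    rw [← Finset.mul_sum]
    gcongr
    exact (h.mu_summable k8).sum_le_tsum _ fun i _ => measureReal_nonneg
  have m2 := (measureReal_biUnion_finset_le (μ := P) (Finset.range n).offDiag fun ij =>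
      {ω | ε / (n + 1) * x < Y ij.1 ω * θ ij.1 ω ∧ ε / (n + 1) * x < Y ij.2 ω * θ ij.2 ω}).trans k2
  have m3 : P.real {ω | ∃ N : ℕ, ε * x < ∑ i ∈ Finset.range N, Y (i + n) ω * θ (i + n) ω} ≤ η * g x := by
    refine (h.tail_sum n k5 k6).trans ?_
    have ha : 0 ≤ ∑' i, ∫ ω, θ (i + n) ω ^ q ∂P := tsum_nonneg fun i => h.a_nonneg _
    have hb' : 0 ≤ (∑' i, (∫ ω, θ (i + n) ω ^ q ∂P) ^ (1 / p)) ^ p :=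
      Real.rpow_nonneg (tsum_nonneg fun i => Real.rpow_nonneg (h.a_nonneg _) _) _
    calc _ ≤ C * (D * g x) * (∑' i, ∫ ω, θ (i + n) ω ^ q ∂P) +
        K * C * (D * g x) * (∑' i, (∫ ω, θ (i + n) ω ^ q ∂P) ^ (1 / p)) ^ p := by gcongr
      _ = (C * D * (∑' i, ∫ ω, θ (i + n) ω ^ q ∂P) +
        K * C * D * (∑' i, (∫ ω, θ (i + n) ω ^ q ∂P) ^ (1 / p)) ^ p) * g x := by ring
      _ ≤ _ := by gcongr
  have u0 := measureReal_mono (μ := P) hsub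
  have u1 := measureReal_union_le (μ := P) (E ε x)
    ((⋃ i ∈ Finset.range n, {ω | b * x < Y i ω * θ i ω}) ∪
      ((⋃ ij ∈ (Finset.range n).offDiag,
      {ω | ε / (n + 1) * x < Y ij.1 ω * θ ij.1 ω ∧ ε / (n + 1) * x < Y ij.2 ω * θ ij.2 ω}) ∪
      {ω | ∃ N : ℕ, ε * x < ∑ i ∈ Finset.range N, Y (i + n) ω * θ (i + n) ω}))
  have u2 := measureReal_union_le (μ := P) (⋃ i ∈ Finset.range n, {ω | b * x < Y i ω * θ i ω})
      ((⋃ ij ∈ (Finset.range n).offDiag,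
      {ω | ε / (n + 1) * x < Y ij.1 ω * θ ij.1 ω ∧ ε / (n + 1) * x < Y ij.2 ω * θ ij.2 ω}) ∪
      {ω | ∃ N : ℕ, ε * x < ∑ i ∈ Finset.range N, Y (i + n) ω * θ (i + n) ω})
  have u3 := measureReal_union_le (μ := P) (⋃ ij ∈ (Finset.range n).offDiag,
      {ω | ε / (n + 1) * x < Y ij.1 ω * θ ij.1 ω ∧ ε / (n + 1) * x < Y ij.2 ω * θ ij.2 ω})
      {ω | ∃ N : ℕ, ε * x < ∑ i ∈ Finset.range N, Y (i + n) ω * θ (i + n) ω}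
  linarith

lemma lower (h : WSum P lam g Y θ p q C x₀ K x₁) (R : ℝ → Set Ω) (E : ℝ → ℝ → Set Ω)
    (hE : ∀ ε, 0 < ε → Tendsto (fun x => P.real (E ε x) / g x) atTop (𝓝 0))
    (hlow : ∀ ε, 0 < ε → ∀ᶠ x in atTop, ∀ i, {ω | (1 + ε) * x < Y i ω * θ i ω} ⊆ R x ∪ E ε x)
    {η : ℝ} (hη : 0 < η) (hη1 : η ≤ 1) :
    ∀ᶠ x in atTop, (∑' i, P.real {ω | x < Y i ω * θ i ω}) ≤
      (1 + η) * P.real (R x) + 5 * η * g x := by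
  obtain ⟨b, hb0, hb1, hb⟩ := h.hH1 η hη
  obtain ⟨X₀, hX₀⟩ := eventually_atTop.1 hb
  set X := max X₀ 1 with hX
  have hXpos : 0 < X := lt_of_lt_of_le one_pos (le_max_right _ _)
  have hXb : ∀ x, X ≤ x → g (b * x) ≤ (1 + η) * g x := fun x hx =>
    hX₀ x ((le_max_left _ _).trans hx)
  set ε := 1 / b - 1 with hε
  have hε0 : 0 < ε := by
    rw [hε, sub_pos, lt_div_iff₀ hb0]; linarith
  have hC := h.hC
  have hlim : Tendsto (fun n : ℕ => C * (∑' i, ∫ ω, θ (i + n) ω ^ q ∂P)) atTop (𝓝 0) := by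
    have := (tendsto_sum_nat_add (fun i => ∫ ω, θ i ω ^ q ∂P)).const_mul C
    simpa using this
  obtain ⟨n, hn⟩ := (hlim.eventually (gt_mem_nhds hη)).exists
  have hpairs : Tendsto (fun x => (∑ i ∈ Finset.range n, ∑ j ∈ Finset.range i,
      P.real {ω | (1 + ε) * x < Y i ω * θ i ω ∧ (1 + ε) * x < Y j ω * θ j ω}) / g x)
      atTop (𝓝 0) := by
    simp_rw [Finset.sum_div]
    have := tendsto_finsetSum (Finset.range n) (fun i _ =>
      tendsto_finsetSum (Finset.range i) (fun j hj =>
      h.pair_negl (s := 1 + ε) (by positivity) (Finset.mem_range.1 hj).ne'))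
    simpa using this
  filter_upwards [h.ev_le_of_tendsto (hE ε hε0) hη, h.ev_le_of_tendsto hpairs hη, hlow ε hε0,
    eventually_ge_atTop X, eventually_ge_atTop x₀] with x k1 k2 k3 k7 k8
  have hx0 : 0 < x := hXpos.trans_le k7
  have hgx := h.hpos x
  have hsm := h.mu_summable k8
  rw [← hsm.sum_add_tsum_nat_add n]
  have hbε : b * (1 + ε) = 1 := by
    rw [hε, add_sub_cancel, mul_one_div_cancel hb0.ne']
  have k9 : X ≤ (1 + ε) * x := by
    have := mul_pos hε0 hx0
    rw [add_mul, one_mul]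
    linarith
  have m1 : ∑ i ∈ Finset.range n, P.real {ω | x < Y i ω * θ i ω} ≤
      (1 + η) * ∑ i ∈ Finset.range n, P.real {ω | (1 + ε) * x < Y i ω * θ i ω} := by
    rw [Finset.mul_sum]
    refine Finset.sum_le_sum fun i _ => ?_
    have := h.mu_cmp hη hXpos hXb i (x := (1 + ε) * x) k9
    have e : b * ((1 + ε) * x) = x := by rw [← mul_assoc, hbε, one_mul]
    rwa [e] at this
  have hs1 : Summable fun i => P.real {ω | x < Y (i + n) ω * θ (i + n) ω} :=
    (summable_nat_add_iff (f := fun i => P.real {ω | x < Y i ω * θ i ω}) n).2 hsm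
  have hs2 : Summable fun i => ∫ ω, θ (i + n) ω ^ q ∂P :=
    (summable_nat_add_iff (f := fun i => ∫ ω, θ i ω ^ q ∂P) n).2 h.a_summable
  have m2 : ∑' i, P.real {ω | x < Y (i + n) ω * θ (i + n) ω} ≤ η * g x := by
    calc _ ≤ ∑' i, C * g x * ∫ ω, θ (i + n) ω ^ q ∂P :=
          Summable.tsum_le_tsum (fun i => h.mu_le (i + n) k8) hs1 (hs2.mul_left _)
      _ = C * (∑' i, ∫ ω, θ (i + n) ω ^ q ∂P) * g x := by rw [tsum_mul_left]; ring
      _ ≤ _ := by gcongr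
  have m3 := bonferroni P (fun i => {ω | (1 + ε) * x < Y i ω * θ i ω})
    (fun i => measurableSet_lt measurable_const (h.prodm i)) n
  have m4 : P.real (⋃ i ∈ Finset.range n, {ω | (1 + ε) * x < Y i ω * θ i ω}) ≤
      P.real (R x) + P.real (E ε x) := by
    refine (measureReal_mono (iUnion₂_subset fun i _ => k3 i)).trans (measureReal_union_le _ _)
  have m5 : ∑ i ∈ Finset.range n, ∑ j ∈ Finset.range i, P.real
      ({ω | (1 + ε) * x < Y i ω * θ i ω} ∩ {ω | (1 + ε) * x < Y j ω * θ j ω}) ≤ η * g x := k2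
  have m6 : ∑ i ∈ Finset.range n, P.real {ω | (1 + ε) * x < Y i ω * θ i ω} ≤
      P.real (R x) + 2 * η * g x := by linarith
  have m7 : (1 + η) * ∑ i ∈ Finset.range n, P.real {ω | (1 + ε) * x < Y i ω * θ i ω} ≤
      (1 + η) * (P.real (R x) + 2 * η * g x) := by gcongr
  have m8 : η * (η * g x) ≤ 1 * (η * g x) := by gcongr
  have m9 : (1 + η) * (P.real (R x) + 2 * η * g x) =
      (1 + η) * P.real (R x) + 2 * (η * g x) + 2 * (η * (η * g x)) := by ring
  rw [m9] at m7
  linarith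

theorem main (h : WSum P lam g Y θ p q C x₀ K x₁) (R : ℝ → Set Ω) (E : ℝ → ℝ → Set Ω)
    (hE : ∀ ε, 0 < ε → Tendsto (fun x => P.real (E ε x) / g x) atTop (𝓝 0))
    (hup : ∀ ε, 0 < ε → ε < 1 → ∀ᶠ x in atTop,
      R x ⊆ E ε x ∪ {ω | ∃ N : ℕ, (1 - ε) * x < ∑ i ∈ Finset.range N, Y i ω * θ i ω})
    (hlow : ∀ ε, 0 < ε → ∀ᶠ x in atTop, ∀ i, {ω | (1 + ε) * x < Y i ω * θ i ω} ⊆ R x ∪ E ε x) :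
    Tendsto (fun x => P.real (R x) / ∑' i, P.real {ω | x < Y i ω * θ i ω}) atTop (𝓝 1) := by
  obtain ⟨c, hc, hcev⟩ := h.mu_zero
  rw [Metric.tendsto_nhds]
  intro e he
  set η := min 1 (e / (2 * (1 + 5 / c))) with hη
  have hη0 : 0 < η := by rw [hη]; positivity
  have hη1 : η ≤ 1 := min_le_left _ _
  have hη2 : η * (1 + 5 / c) ≤ e / 2 := by
    have := min_le_right 1 (e / (2 * (1 + 5 / c)))
    rw [← hη] at this
    calc η * (1 + 5 / c) ≤ e / (2 * (1 + 5 / c)) * (1 + 5 / c) := by gcongr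
      _ = _ := by field_simp
  filter_upwards [h.upper R E hE hup hη0, h.lower R E hE hlow hη0 hη1, hcev,
    eventually_ge_atTop x₀] with x k1 k2 k3 k4
  have hgx := h.hpos x
  set S := ∑' i, P.real {ω | x < Y i ω * θ i ω} with hS
  have hS1 : c * g x ≤ S := k3.trans ((h.mu_summable k4).le_tsum 0 fun j _ => measureReal_nonneg)
  have hSpos : 0 < S := lt_of_lt_of_le (by positivity) hS1
  have hgS : g x ≤ S / c := by rw [le_div_iff₀ hc]; linarith
  set u := P.real (R x) / S with hu
  have hRu : P.real (R x) = u * S := by rw [hu]; field_simp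
  rw [hRu] at k1 k2
  have k5 : u ≤ 1 + η + 3 * η / c := by
    have : u * S ≤ (1 + η + 3 * η / c) * S := by
      calc u * S ≤ (1 + η) * S + 3 * η * g x := k1
        _ ≤ (1 + η) * S + 3 * η * (S / c) := by gcongr
        _ = _ := by ring
    exact le_of_mul_le_mul_right this hSpos
  have k6 : 1 ≤ (1 + η) * u + 5 * η / c := by
    have : 1 * S ≤ ((1 + η) * u + 5 * η / c) * S := by
      calc 1 * S ≤ (1 + η) * (u * S) + 5 * η * g x := by linarith
        _ ≤ (1 + η) * (u * S) + 5 * η * (S / c) := by gcongr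
        _ = _ := by ring
    exact le_of_mul_le_mul_right this hSpos
  have hηc : 0 < η / c := by positivity
  have e1 : 3 * η / c = 3 * (η / c) := by ring
  have e2 : 5 * η / c = 5 * (η / c) := by ring
  have e3 : η * (1 + 5 / c) = η + 5 * (η / c) := by ring
  rw [e1] at k5
  rw [e2] at k6
  rw [e3] at hη2
  rw [Real.dist_eq, abs_lt]
  constructor
  · rcases le_total 1 u with h1 | h1
    · linarith
    · nlinarith
  · linarith

end WSum

/-! ### Part E: geometry of the ruin set -/

/-- The geometric hypotheses on `A = l - L`. -/
structure Geo {d : ℕ} (A L : Set (Fin d → ℝ)) (l : Fin d → ℝ) : Prop where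
  isopen : IsOpen L
  dec : ∀ z ∈ L, ∀ w : Fin d → ℝ, (∀ k, 0 ≤ w k) → z - w ∈ L
  zero : (0 : Fin d → ℝ) ∈ frontier L
  conv : Convex ℝ Lᶜ
  cone : ∀ y : ℝ, 0 < y → y • L = L
  hl : ∀ k, 0 < l k
  adef : A = (fun z => l - z) '' L

namespace Geo

variable {d : ℕ} {A L : Set (Fin d → ℝ)} {l : Fin d → ℝ}

lemma smul_mem (h : Geo A L l) {y : ℝ} (hy : 0 < y) {z : Fin d → ℝ} : y • z ∈ L ↔ z ∈ L := by
  constructor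
  · intro hz
    rw [← h.cone y hy] at hz
    exact (smul_mem_smul_set_iff₀ hy.ne' L z).1 hz
  · intro hz
    rw [← h.cone y hy]
    exact smul_mem_smul_set hz

lemma zero_notMem (h : Geo A L l) : (0 : Fin d → ℝ) ∉ L := by
  have := h.zero
  rw [h.isopen.frontier_eq] at this
  exact this.2

lemma nonneg_notMem (h : Geo A L l) {z : Fin d → ℝ} (hz : ∀ k, 0 ≤ z k) : z ∉ L := by
  intro hc
  have := h.dec z hc z hz
  rw [sub_self] at this
  exact h.zero_notMem this

lemma le_mem (h : Geo A L l) {a b : Fin d → ℝ} (hb : b ∈ L) (hab : ∀ k, a k ≤ b k) : a ∈ L := by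
  have := h.dec b hb (b - a) (fun k => by simpa using hab k)
  rwa [sub_sub_cancel] at this

lemma add_notMem (h : Geo A L l) {a b : Fin d → ℝ} (ha : a ∉ L) (hb : b ∉ L) : a + b ∉ L := by
  have h1 := h.conv ha hb (by norm_num : (0 : ℝ) ≤ 1 / 2) (by norm_num : (0 : ℝ) ≤ 1 / 2) (by norm_num)
  rw [← smul_add] at h1
  intro hc
  exact h1 ((h.smul_mem (by norm_num)).2 hc)

lemma mem_smul (h : Geo A L l) {u : ℝ} (hu : 0 < u) (z : Fin d → ℝ) :
    z ∈ u • A ↔ u • l - z ∈ L := by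
  rw [mem_smul_set_iff_inv_smul_mem₀ hu.ne', h.adef]
  have e : u • l - z = u • (l - u⁻¹ • z) := by
    rw [smul_sub, smul_inv_smul₀ hu.ne']
  rw [e, h.smul_mem hu]
  constructor
  · rintro ⟨w, hw, hwe⟩
    have : l - u⁻¹ • z = w := by
      rw [← hwe]; simp
    rw [this]; exact hw
  · intro hw
    exact ⟨_, hw, by simp⟩

lemma bdd (h : Geo A L l) (z : Fin d → ℝ) : BddAbove {u : ℝ | 0 < u ∧ z ∈ u • A} := by
  have : ∃ U : ℝ, ∀ k, z k ≤ U * l k := by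
    have : ∀ k, ∀ᶠ U : ℝ in atTop, z k ≤ U * l k := fun k =>
      (tendsto_id.atTop_mul_const (h.hl k)).eventually_ge_atTop (z k)
    exact (eventually_all.2 this).exists
  obtain ⟨U, hU⟩ := this
  refine ⟨U, ?_⟩
  rintro u ⟨hu, hz⟩
  rw [h.mem_smul hu] at hz
  by_contra hc
  push Not at hc
  refine h.nonneg_notMem (fun k => ?_) hz
  have := h.hl k
  have := hU k
  simp only [Pi.sub_apply, Pi.smul_apply, smul_eq_mul]
  nlinarith

lemma lt_iff_exists (h : Geo A L l) {x : ℝ} (hx : 0 ≤ x) (z : Fin d → ℝ) :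
    x < projA A z ↔ ∃ u, x < u ∧ u • l - z ∈ L := by
  constructor
  · intro hlt
    have hne : {u : ℝ | 0 < u ∧ z ∈ u • A}.Nonempty := by
      by_contra hc
      rw [not_nonempty_iff_eq_empty] at hc
      rw [projA, hc, Real.sSup_empty] at hlt
      linarith
    obtain ⟨u, ⟨hu, hz⟩, hxu⟩ := exists_lt_of_lt_csSup hne hlt
    exact ⟨u, hxu, (h.mem_smul hu z).1 hz⟩
  · rintro ⟨u, hxu, hz⟩
    have hu : 0 < u := hx.trans_lt hxu
    exact hxu.trans_le (le_csSup (h.bdd z) ⟨hu, (h.mem_smul hu z).2 hz⟩)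

lemma lt_iff (h : Geo A L l) {x : ℝ} (hx : 0 < x) (z : Fin d → ℝ) :
    x < projA A z ↔ x • l - z ∈ L := by
  rw [h.lt_iff_exists hx.le]
  constructor
  · rintro ⟨u, hxu, hz⟩
    refine h.le_mem hz fun k => ?_
    have := h.hl k
    simp only [Pi.sub_apply, Pi.smul_apply, smul_eq_mul]
    nlinarith
  · intro hz
    have hc : Continuous fun u : ℝ => u • l - z := by fun_prop
    have : ∀ᶠ u in 𝓝 x, u • l - z ∈ L := hc.continuousAt.eventually_mem (h.isopen.mem_nhds hz)
    have h2 : ∀ᶠ u in 𝓝[>] x, u • l - z ∈ L := nhdsWithin_le_nhds this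
    obtain ⟨u, hu1, hu2⟩ := (h2.and self_mem_nhdsWithin).exists
    exact ⟨u, hu2, hu1⟩

lemma nonneg (z : Fin d → ℝ) : 0 ≤ projA A z :=
  Real.sSup_nonneg fun _ hu => hu.1.le

lemma meas (h : Geo A L l) : Measurable (projA A) := by
  refine measurable_of_Ioi fun x => ?_
  rcases lt_or_ge x 0 with hx | hx
  · have : projA A ⁻¹' Ioi x = univ := by
      rw [eq_univ_iff_forall]
      exact fun z => hx.trans_le (nonneg z)
    rw [this]
    exact MeasurableSet.univ
  · have : projA A ⁻¹' Ioi x = ⋃ u ∈ Ioi x, {z | u • l - z ∈ L} := by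
      ext z
      simp only [mem_preimage, mem_Ioi, h.lt_iff_exists hx, mem_iUnion, exists_prop, mem_ofPred_eq]
    rw [this]
    refine (isOpen_biUnion fun u _ => ?_).measurableSet
    exact h.isopen.preimage (by fun_prop : Continuous fun z : Fin d → ℝ => u • l - z)

lemma mono (h : Geo A L l) {a b : Fin d → ℝ} (hab : ∀ k, a k ≤ b k) : projA A a ≤ projA A b := by
  by_contra hc
  push Not at hc
  obtain ⟨u, hu1, hu2⟩ := exists_between hc
  have hu : 0 < u := (nonneg b).trans_lt hu1
  have := (h.lt_iff hu a).1 hu2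
  have h2 : u • l - b ∈ L := h.le_mem this fun k => by
    have := hab k
    simp only [Pi.sub_apply]
    linarith
  exact lt_asymm hu1 ((h.lt_iff hu b).2 h2)

lemma proj_zero (h : Geo A L l) : projA A 0 = 0 := by
  refine le_antisymm ?_ (nonneg 0)
  by_contra hc
  push Not at hc
  obtain ⟨u, hu1, hu2⟩ := exists_between hc
  have := (h.lt_iff hu1 0).1 hu2
  refine h.nonneg_notMem (fun k => ?_) this
  have := h.hl k
  simp only [Pi.sub_apply, Pi.smul_apply, smul_eq_mul, Pi.zero_apply]
  nlinarith

lemma subadd (h : Geo A L l) (a b : Fin d → ℝ) : projA A (a + b) ≤ projA A a + projA A b := by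
  by_contra hc
  push Not at hc
  obtain ⟨u, hu1, hu2⟩ := exists_between hc
  have ha := nonneg (A := A) a
  have hb := nonneg (A := A) b
  set s := (u - projA A a - projA A b) / 2 with hs
  have hs0 : 0 < s := by rw [hs]; linarith
  have h1 : (projA A a + s) • l - a ∉ L := by
    rw [← h.lt_iff (by linarith)]; linarith
  have h2 : (projA A b + s) • l - b ∉ L := by
    rw [← h.lt_iff (by linarith)]; linarith
  have h3 := h.add_notMem h1 h2
  have e : (projA A a + s) • l - a + ((projA A b + s) • l - b) = u • l - (a + b) := by
    have : u = projA A a + s + (projA A b + s) := by rw [hs]; ring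
    conv_rhs => rw [this]
    rw [add_smul (projA A a + s)]
    abel
  rw [e, ← h.lt_iff (by linarith)] at h3
  exact h3 hu2

lemma sum_le (h : Geo A L l) (s : Finset ℕ) (z : ℕ → Fin d → ℝ) :
    projA A (∑ i ∈ s, z i) ≤ ∑ i ∈ s, projA A (z i) :=
  Finset.le_sum_of_subadditive _ h.proj_zero.le h.subadd s z

lemma homog (h : Geo A L l) {e : ℝ} (he : 0 < e) (z : Fin d → ℝ) :
    projA A (e • z) = projA A z * e := by
  have key : ∀ x, 0 < x → (x < projA A (e • z) ↔ x < projA A z * e) := by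
    intro x hx
    rw [h.lt_iff hx, ← div_lt_iff₀ he, h.lt_iff (by positivity), ← h.smul_mem he (z := (x / e) • l - z),
      smul_sub, smul_smul, mul_div_cancel₀ _ he.ne']
  have n1 := nonneg (A := A) (e • z)
  have n2 : 0 ≤ projA A z * e := mul_nonneg (nonneg z) he.le
  rcases lt_trichotomy (projA A (e • z)) (projA A z * e) with hh | hh | hh
  · obtain ⟨u, hu1, hu2⟩ := exists_between hh
    exact absurd ((key u (by linarith)).2 hu2) (by linarith)
  · exact hh
  · obtain ⟨u, hu1, hu2⟩ := exists_between hh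
    exact absurd ((key u (by linarith)).1 hu2) (by linarith)

end Geo

/-! ### discounted integrals -/

lemma integral_exp_decay {s : ℝ} (hs : 0 < s) (t : ℝ) :
    ∫ u in (0 : ℝ)..t, Real.exp (-(s * u)) = (1 - Real.exp (-(s * t))) / s := by
  have hd : ∀ u ∈ uIcc 0 t, HasDerivAt (fun u => -(Real.exp (-(s * u)) / s)) (Real.exp (-(s * u))) u := by
    intro u _
    have h1 : HasDerivAt (fun u : ℝ => -(s * u)) (-(s * 1)) u := ((hasDerivAt_id u).const_mul s).neg
    have h2 := (h1.exp.div_const s).neg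
    exact h2.congr_deriv (by field_simp)
  rw [intervalIntegral.integral_eq_sub_of_hasDerivAt hd (Continuous.intervalIntegrable (by fun_prop) _ _)]
  simp
  ring

lemma disc_int_bound {s C : ℝ} (hs : 0 < s) (hC : 0 ≤ C) {f : ℝ → ℝ}
    (hf : ∀ u, 0 ≤ u → |f u| ≤ C * Real.exp (-(s * u))) {t : ℝ} (ht : 0 ≤ t) :
    |∫ u in (0 : ℝ)..t, f u| ≤ C / s := by
  have h1 := intervalIntegral.norm_integral_le_of_norm_le (μ := volume) (f := f)
    (g := fun u => C * Real.exp (-(s * u))) ht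
    (Eventually.of_forall fun u hu => by rw [Real.norm_eq_abs]; exact hf u hu.1.le)
    (Continuous.intervalIntegrable (by fun_prop) _ _)
  rw [Real.norm_eq_abs, intervalIntegral.integral_const_mul, integral_exp_decay hs] at h1
  refine h1.trans ?_
  rw [← mul_div_assoc]
  gcongr
  have := Real.exp_pos (-(s * t))
  nlinarith

lemma discBM_bound {Ω : Type*} {r y : ℝ} (hr : 0 < r) (hy : 0 ≤ y) (Bi : ℝ → Ω → ℝ) (ω : Ω)
    (hB : ∀ t, 0 ≤ t → |Bi t ω| ≤ y * Real.exp (r / 2 * t)) {t : ℝ} (ht : 0 ≤ t) :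
    |discBM r Bi t ω| ≤ 3 * y := by
  have hb : ∀ u, 0 ≤ u → |Real.exp (-(r * u)) * Bi u ω| ≤ y * Real.exp (-(r / 2 * u)) := by
    intro u hu
    rw [abs_mul, abs_of_pos (Real.exp_pos _)]
    calc Real.exp (-(r * u)) * |Bi u ω| ≤ Real.exp (-(r * u)) * (y * Real.exp (r / 2 * u)) := by
          gcongr; exact hB u hu
      _ = y * (Real.exp (-(r * u)) * Real.exp (r / 2 * u)) := by ring
      _ = _ := by rw [← Real.exp_add]; congr 2; ring
  have h1 := disc_int_bound (by linarith : 0 < r / 2) hy hb ht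
  have h2 := hb t ht
  have h3 : Real.exp (-(r / 2 * t)) ≤ 1 := Real.exp_le_one_iff.2 (by
    have : 0 ≤ r / 2 * t := by positivity
    linarith)
  unfold discBM
  refine (abs_add_le _ _).trans ?_
  rw [abs_mul r, abs_of_pos hr]
  have h4 : r * |∫ s in (0 : ℝ)..t, Real.exp (-(r * s)) * Bi s ω| ≤ r * (y / (r / 2)) := by gcongr
  have h5 : r * (y / (r / 2)) = 2 * y := by field_simp
  have h6 : y * Real.exp (-(r / 2 * t)) ≤ y * 1 := by gcongr
  linarith

lemma poly_lower {g : ℝ → ℝ} (hpos : ∀ x, 0 < g x) (hanti : Antitone g) (hle : ∀ x, g x ≤ 1)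
    {p v κ : ℝ} (hp : 0 < p) (hv : 1 < v) (hκ : 1 < κ * v ^ p)
    (hev : ∀ᶠ x in atTop, κ * g x ≤ g (v * x)) :
    ∃ C x₀ : ℝ, 0 < C ∧ 0 < x₀ ∧ ∀ y, x₀ ≤ y → 1 ≤ C * y ^ p * g y := by
  have hg1 := hpos 1
  obtain ⟨C, x₀, hC, hx₀, h⟩ := karamata_induct hpos hanti hp hv hκ hev
    (fun y => if 1 ≤ y then g 1 else 0)
    (by
      intro y hy
      split_ifs with h1
      · exact (hle 1).trans (Real.one_le_rpow h1 hp.le)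
      · positivity)
    (by
      intro y hy
      have hgy := hpos y
      have hv0 : 0 < v := by linarith
      by_cases h1 : 1 ≤ y
      · rw [if_pos h1, if_pos (by nlinarith)]
        have : 0 ≤ (v * y) ^ p * g y := by positivity
        linarith
      · rw [if_neg h1]
        push Not at h1
        split_ifs with h2
        · have h3 : 1 ≤ (v * y) ^ p := Real.one_le_rpow h2 hp.le
          have h4 := hanti h1.le
          nlinarith
        · have : 0 ≤ (v * y) ^ p * g y := by positivity
          linarith)
  refine ⟨C / g 1, max x₀ 1, by positivity, by positivity, fun y hy => ?_⟩
  have := h y ((le_max_left _ _).trans hy)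
  rw [if_pos ((le_max_right _ _).trans hy)] at this
  rw [div_mul_eq_mul_div, div_mul_eq_mul_div, le_div_iff₀ hg1]
  linarith

/-- the exceptional set for the Brownian perturbation -/
def excSet {Ω : Type*} {d : ℕ} (r : ℝ) (τ : ℕ → Ω → ℝ) (Bm : Fin d → ℝ → Ω → ℝ) (y : ℝ) : Set Ω :=
  {ω | ¬ Tendsto (fun i => τ i ω) atTop atTop} ∪
    ⋃ k ∈ (Finset.univ : Finset (Fin d)), {ω | ∃ t, 0 ≤ t ∧ y * Real.exp (r / 2 * t) < |Bm k t ω|}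

lemma null_tau {Ω : Type*} [MeasurableSpace Ω] (P : Measure Ω) [IsProbabilityMeasure P]
    {r q : ℝ} (hr : 0 < r) (hq : 0 < q) (τ : ℕ → Ω → ℝ) (hτmeas : ∀ i, Measurable (τ i))
    (hτnn : ∀ i ω, 0 ≤ τ i ω) (hτmono : ∀ i ω, τ i ω ≤ τ (i + 1) ω)
    (hs : Tendsto (fun i => ∫ ω, Real.exp (-(q * (r * τ i ω))) ∂P) atTop (𝓝 0)) :
    P {ω | ¬ Tendsto (fun i => τ i ω) atTop atTop} = 0 := by
  have hsub : {ω | ¬ Tendsto (fun i => τ i ω) atTop atTop} ⊆ ⋃ n : ℕ, {ω | ∀ i, τ i ω ≤ n} := by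
    intro ω hω
    by_contra hc
    rw [mem_iUnion] at hc
    push Not at hc
    apply hω
    refine tendsto_atTop_atTop_of_monotone (monotone_nat_of_le_succ fun i => hτmono i ω) fun b => ?_
    obtain ⟨n, hn⟩ := exists_nat_ge b
    have := hc n
    simp only [mem_ofPred_eq] at this
    push Not at this
    obtain ⟨i, hi⟩ := this
    exact ⟨i, hn.trans hi.le⟩
  refine measure_mono_null hsub (measure_iUnion_null fun n => ?_)
  have hint : ∀ i, Integrable (fun ω => Real.exp (-(q * (r * τ i ω)))) P := by
    intro i
    refine Integrable.of_bound (C := 1) (by have := hτmeas i; fun_prop) ?_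
    refine Eventually.of_forall fun ω => ?_
    rw [Real.norm_of_nonneg (Real.exp_pos _).le, Real.exp_le_one_iff]
    have := hτnn i ω
    have : 0 ≤ q * (r * τ i ω) := by positivity
    linarith
  set c := Real.exp (-(q * (r * n))) with hc
  have hc0 : 0 < c := Real.exp_pos _
  have hb : ∀ i, c * P.real {ω | ∀ i, τ i ω ≤ n} ≤ ∫ ω, Real.exp (-(q * (r * τ i ω))) ∂P := by
    intro i
    refine le_trans ?_ (mul_meas_ge_le_integral_of_nonneg
      (Eventually.of_forall fun ω => (Real.exp_pos _).le) (hint i) c)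
    refine mul_le_mul_of_nonneg_left (measureReal_mono ?_) hc0.le
    · intro ω hω
      simp only [mem_ofPred_eq, hc, Real.exp_le_exp] at hω ⊢
      have := hω i
      have : q * (r * τ i ω) ≤ q * (r * n) := by gcongr
      linarith
  have h0 := ge_of_tendsto' hs hb
  have h1 : P.real {ω | ∀ i, τ i ω ≤ n} = 0 := by
    have := measureReal_nonneg (μ := P) (s := {ω | ∀ i, τ i ω ≤ n})
    nlinarith
  rwa [measureReal_eq_zero_iff] at h1

lemma excSet_negl {Ω : Type*} [MeasurableSpace Ω] (P : Measure Ω) [IsProbabilityMeasure P] {d : ℕ}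
    {r : ℝ} (hr : 0 < r) (τ : ℕ → Ω → ℝ) (Bm : Fin d → ℝ → Ω → ℝ)
    (hτ : P {ω | ¬ Tendsto (fun i => τ i ω) atTop atTop} = 0)
    (hB0 : ∀ k ω, Bm k 0 ω = 0)
    (hBmeas : ∀ k t, Measurable (Bm k t))
    (hBcont : ∀ᵐ ω ∂P, ∀ k, Continuous fun t => Bm k t ω)
    (hBgauss : ∀ k, ∀ s t : ℝ, 0 ≤ s → s < t →
      P.map (fun ω => Bm k t ω - Bm k s ω) = gaussianReal 0 (Real.toNNReal (t - s)))
    {g : ℝ → ℝ} (hpos : ∀ x, 0 < g x) {p C x₀ : ℝ} (hC : 0 < C) (hx₀ : 0 < x₀)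
    (hg : ∀ y, x₀ ≤ y → 1 ≤ C * y ^ p * g y) {a : ℝ} (ha : 0 < a) :
    Tendsto (fun x => P.real (excSet r τ Bm (a * x)) / g x) atTop (𝓝 0) := by
  obtain ⟨b₀, hb₀⟩ := exists_nat_gt p
  set b := b₀ + 2 with hb
  have hbm : ∀ k, ∃ D : ℝ, 0 ≤ D ∧ ∀ y : ℝ, 0 < y →
      P {ω | ∃ t, 0 ≤ t ∧ y * Real.exp (r / 2 * t) < |Bm k t ω|} ≤ ENNReal.ofReal (D / y ^ (2 * b)) :=
    fun k => bm_sup P (Bm k) (hB0 k) (hBmeas k) (hBcont.mono fun ω h => h k) (hBgauss k) b (by omega)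
      (by linarith)
  choose D hD0 hD using hbm
  have hDs : 0 ≤ ∑ k, D k := Finset.sum_nonneg fun k _ => hD0 k
  have hlim : Tendsto (fun x : ℝ => C * (∑ k, D k) / a ^ (2 * b) * x ^ (-((2 * b : ℕ) - p : ℝ))) atTop (𝓝 0) := by
    have hpos2 : (0 : ℝ) < (2 * b : ℕ) - p := by
      rw [hb]; push_cast
      have : (0 : ℝ) ≤ b₀ := Nat.cast_nonneg _
      linarith
    have := (tendsto_rpow_neg_atTop hpos2).const_mul (C * (∑ k, D k) / a ^ (2 * b))
    simpa using this
  refine squeeze_zero' (Eventually.of_forall fun x => div_nonneg measureReal_nonneg (hpos x).le) ?_ hlim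
  filter_upwards [eventually_ge_atTop x₀] with x hx
  have hx0 : 0 < x := hx₀.trans_le hx
  have hax : 0 < a * x := by positivity
  have hgx := hpos x
  have h1 : P.real (excSet r τ Bm (a * x)) ≤ (∑ k, D k) / (a * x) ^ (2 * b) := by
    have hz : P.real {ω | ¬ Tendsto (fun i => τ i ω) atTop atTop} = 0 := by
      rw [measureReal_def, hτ]; rfl
    refine (measureReal_union_le _ _).trans ?_
    rw [hz, zero_add, Finset.sum_div]
    refine (measureReal_biUnion_finset_le _ _).trans (Finset.sum_le_sum fun k _ => ?_)
    refine ENNReal.toReal_le_of_le_ofReal ?_ (hD k _ hax)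
    have := hD0 k
    positivity
  rw [div_le_iff₀ hgx]
  refine h1.trans ?_
  have hgg := hg x hx
  have hxp : x ^ (-((2 * b : ℕ) - p : ℝ)) = x ^ p / x ^ (2 * b) := by
    rw [neg_sub, Real.rpow_sub hx0, Real.rpow_natCast]
  rw [hxp, mul_pow]
  calc (∑ k, D k) / (a ^ (2 * b) * x ^ (2 * b))
      ≤ (∑ k, D k) / (a ^ (2 * b) * x ^ (2 * b)) * (C * x ^ p * g x) :=
        le_mul_of_one_le_right (by positivity) hgg
    _ = _ := by field_simp

lemma surplus_core {Ω : Type*} {d : ℕ} {A L : Set (Fin d → ℝ)} {l : Fin d → ℝ} (h : Geo A L l)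
    {r : ℝ} (hr : 0 < r) (X : ℕ → Ω → Fin d → ℝ) (τ : ℕ → Ω → ℝ)
    (hXnn : ∀ i ω k, 0 ≤ X i ω k) (hτnn : ∀ i ω, 0 ≤ τ i ω)
    (c : Fin d → ℝ → Ω → ℝ) (M : Fin d → ℝ)
    (hcnn : ∀ k s ω, 0 ≤ c k s ω) (hcbd : ∀ k s ω, c k s ω ≤ M k)
    (δv : Fin d → ℝ) (hδv : ∀ k, 0 ≤ δv k) (Bm : Fin d → ℝ → Ω → ℝ)
    {ε a x : ℝ} (hε : 0 < ε) (ha : 0 < a) (hx : 0 < x)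
    (ha2 : ∀ k, 6 * a * δv k ≤ ε * l k) (hx2 : ∀ k, M k / r ≤ ε * x * l k / 2)
    {ω : Ω} (hω : ω ∉ excSet r τ Bm (a * x)) :
    ((∃ t : ℝ, 0 ≤ t ∧ surplus r x l c δv Bm X τ t ω ∈ L) → ε < 1 → ∃ N : ℕ,
      (1 - ε) * x < ∑ i ∈ Finset.range N, projA A (X i ω) * Real.exp (-(r * τ i ω))) ∧
    ∀ i, (1 + ε) * x < projA A (X i ω) * Real.exp (-(r * τ i ω)) →
      ∃ t : ℝ, 0 ≤ t ∧ surplus r x l c δv Bm X τ t ω ∈ L := by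
  have hω1 : Tendsto (fun i => τ i ω) atTop atTop := by
    by_contra hc
    exact hω (Or.inl hc)
  have hω2 : ∀ k t, 0 ≤ t → |Bm k t ω| ≤ a * x * Real.exp (r / 2 * t) := by
    intro k t ht
    by_contra hc
    push Not at hc
    exact hω (Or.inr (mem_biUnion (Finset.mem_univ k) ⟨t, ht, hc⟩))
  have hW : ∀ k t, 0 ≤ t → |δv k * discBM r (Bm k) t ω| ≤ ε * x * l k / 2 := by
    intro k t ht
    have h1 := discBM_bound hr (by positivity : 0 ≤ a * x) (Bm k) ω (hω2 k) ht
    rw [abs_mul, abs_of_nonneg (hδv k)]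
    calc δv k * |discBM r (Bm k) t ω| ≤ δv k * (3 * (a * x)) := by
          have := hδv k
          gcongr
      _ = 6 * a * δv k * x / 2 := by ring
      _ ≤ ε * l k * x / 2 := by
          have := ha2 k
          gcongr
      _ = _ := by ring
  have hI0 : ∀ k t, 0 ≤ t → 0 ≤ ∫ s in (0 : ℝ)..t, Real.exp (-(r * s)) * c k s ω := by
    intro k t ht
    exact intervalIntegral.integral_nonneg ht fun s _ => mul_nonneg (Real.exp_pos _).le (hcnn k s ω)
  have hI1 : ∀ k t, 0 ≤ t → ∫ s in (0 : ℝ)..t, Real.exp (-(r * s)) * c k s ω ≤ ε * x * l k / 2 := by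
    intro k t ht
    have hM : 0 ≤ M k := (hcnn k 0 ω).trans (hcbd k 0 ω)
    refine (le_abs_self _).trans ((disc_int_bound hr hM (fun u hu => ?_) ht).trans (hx2 k))
    rw [abs_of_nonneg (mul_nonneg (Real.exp_pos _).le (hcnn k u ω)), mul_comm]
    have := hcbd k u ω
    gcongr
  set V : ℝ → ℕ → Fin d → ℝ := fun t i =>
    Set.indicator {ω' | τ i ω' ≤ t} (fun ω' => Real.exp (-(r * τ i ω')) • X i ω') ω with hV
  have hV1 : ∀ t i, τ i ω ≤ t → V t i = Real.exp (-(r * τ i ω)) • X i ω := by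
    intro t i hi
    simp only [hV]
    exact indicator_of_mem (s := {ω' | τ i ω' ≤ t}) hi _
  have hV2 : ∀ t i, ¬ τ i ω ≤ t → V t i = 0 := by
    intro t i hi
    simp only [hV]
    exact indicator_of_notMem (s := {ω' | τ i ω' ≤ t}) hi _
  have hVnn : ∀ t i k, 0 ≤ V t i k := by
    intro t i k
    by_cases hc : τ i ω ≤ t
    · rw [hV1 t i hc]
      exact mul_nonneg (Real.exp_pos _).le (hXnn i ω k)
    · rw [hV2 t i hc]; exact le_rfl
  have hVle : ∀ t i k, V t i k ≤ (Real.exp (-(r * τ i ω)) • X i ω) k := by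
    intro t i k
    by_cases hc : τ i ω ≤ t
    · rw [hV1 t i hc]
    · rw [hV2 t i hc]
      exact mul_nonneg (Real.exp_pos _).le (hXnn i ω k)
  have hfin : ∀ t, ∃ N₀ : ℕ, ∀ N, N₀ ≤ N → Dfin r X τ t ω = ∑ i ∈ Finset.range N, V t i := by
    intro t
    obtain ⟨N₀, hN₀⟩ := eventually_atTop.1 (hω1.eventually_gt_atTop t)
    refine ⟨N₀, fun N hN => ?_⟩
    refine tsum_eq_sum (f := V t) fun i hi => hV2 t i ?_
    rw [Finset.mem_range, not_lt] at hi
    exact not_le.2 (hN₀ i (hN.trans hi))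
  constructor
  · rintro ⟨t, ht, hU⟩ hε1
    obtain ⟨N, hN⟩ := hfin t
    refine ⟨N, ?_⟩
    have h1 : ((1 - ε) * x) • l - Dfin r X τ t ω ∈ L := by
      refine h.le_mem hU fun k => ?_
      have w1 := (abs_le.1 (hW k t ht)).1
      have w2 := hI0 k t ht
      have : 0 < ε * x * l k := by have := h.hl k; positivity
      simp only [surplus, Pi.sub_apply, Pi.smul_apply, smul_eq_mul]
      linarith
    rw [← h.lt_iff (mul_pos (by linarith) hx)] at h1
    refine h1.trans_le ?_
    rw [hN N le_rfl]
    refine (h.sum_le _ _).trans (Finset.sum_le_sum fun i _ => ?_)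
    rw [← h.homog (Real.exp_pos _)]
    exact h.mono (hVle t i)
  · intro i hi
    refine ⟨τ i ω, hτnn i ω, ?_⟩
    rw [← h.homog (Real.exp_pos _), h.lt_iff (by positivity)] at hi
    refine h.le_mem hi fun k => ?_
    obtain ⟨N₀, hN⟩ := hfin (τ i ω)
    have hD : (Real.exp (-(r * τ i ω)) • X i ω) k ≤ Dfin r X τ (τ i ω) ω k := by
      rw [hN (max N₀ (i + 1)) (le_max_left _ _), Finset.sum_apply, ← hV1 (τ i ω) i le_rfl]
      exact Finset.single_le_sum (f := fun j => V (τ i ω) j k) (fun j _ => hVnn _ j k)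
        (Finset.mem_range.2 (lt_of_lt_of_le (Nat.lt_succ_self i) (le_max_right _ _)))
    have w1 := (abs_le.1 (hW k _ (hτnn i ω))).2
    have w2 := hI1 k _ (hτnn i ω)
    simp only [surplus, Pi.sub_apply]
    rw [Pi.smul_apply, smul_eq_mul]
    linarith

/-- Corollary 4.2(i): infinite-time ruin probability asymptotics,
`ψ_{l,L}(x;∞) ∼ ∫₀^∞ P(X e^{−rs} ∈ x A) m(ds) = ∑ᵢ P(X⁽ⁱ⁾ e^{−r τᵢ} ∈ x A)`. -/
theorem statement17
    {Ω : Type*} [MeasurableSpace Ω] (P : Measure Ω) [IsProbabilityMeasure P]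
    {d : ℕ} (hd : 1 ≤ d) {A : Set (Fin d → ℝ)} (hA : InRfam d A)
    {r : ℝ} (hr : 0 < r)
    (F : Measure (Fin d → ℝ)) [IsProbabilityMeasure F]
    (X : ℕ → Ω → Fin d → ℝ) (τ : ℕ → Ω → ℝ)
    (hXmeas : ∀ i, Measurable (X i)) (hτmeas : ∀ i, Measurable (τ i))
    (hXnn : ∀ i ω k, 0 ≤ X i ω k)
    (hXdist : ∀ i, P.map (X i) = F)
    (hτnn : ∀ i ω, 0 ≤ τ i ω) (hτmono : ∀ i ω, τ i ω ≤ τ (i + 1) ω)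
    (hindep : IndepFun (fun ω i => X i ω) (fun ω i => τ i ω) P)
    (hFpos : ∀ x : ℝ, 0 < tailA A F x)
    (hFC : ClassC (tailA A F)) (hFPD : ClassPD (tailA A F))
    (hmom : ∃ q₁ q₂ : ℝ, 0 < q₁ ∧ q₁ < Jminus (tailA A F) ∧
      Jminus (tailA A F) ≤ Jplus (tailA A F) ∧ Jplus (tailA A F) < q₂ ∧
      Summable (fun i : ℕ =>
        (max (∫ ω, Real.exp (-(q₁ * (r * τ i ω))) ∂P)
            (∫ ω, Real.exp (-(q₂ * (r * τ i ω))) ∂P)) ^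
          ((1 : ℝ) / (if Jplus (tailA A F) < 1 then 1 else q₂))))
    (hQAI : QAIA P A X)
    (L : Set (Fin d → ℝ)) (hLopen : IsOpen L)
    (hLdec : ∀ z ∈ L, ∀ w : Fin d → ℝ, (∀ k, 0 ≤ w k) → z - w ∈ L)
    (hL0 : (0 : Fin d → ℝ) ∈ frontier L)
    (hLconv : Convex ℝ Lᶜ)
    (hLcone : ∀ y : ℝ, 0 < y → y • L = L)
    (l : Fin d → ℝ) (hl : ∀ k, 0 < l k) (hl1 : ∀ k, l k ≤ 1) (hlsum : ∑ k, l k = 1)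
    (hAdef : A = (fun z => l - z) '' L)
    (c : Fin d → ℝ → Ω → ℝ) (M : Fin d → ℝ)
    (hcnn : ∀ k s ω, 0 ≤ c k s ω) (hcbd : ∀ k s ω, c k s ω ≤ M k)
    (hcmeas : ∀ k, Measurable fun p : ℝ × Ω => c k p.1 p.2)
    (δv : Fin d → ℝ) (hδv : ∀ k, 0 ≤ δv k)
    (Bm : Fin d → ℝ → Ω → ℝ)
    (hB0 : ∀ k ω, Bm k 0 ω = 0)
    (hBmeas : ∀ k t, Measurable (Bm k t))
    (hBcont : ∀ᵐ ω ∂P, ∀ k, Continuous fun t => Bm k t ω)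
    (hBgauss : ∀ k, ∀ s t : ℝ, 0 ≤ s → s < t →
      P.map (fun ω => Bm k t ω - Bm k s ω) = gaussianReal 0 (Real.toNNReal (t - s)))
    (hBpast : ∀ k, ∀ s t : ℝ, 0 ≤ s → s < t →
      IndepFun (fun ω => Bm k t ω - Bm k s ω) (fun ω => fun u : Iic s => Bm k u.1 ω) P)
    (hBindep : IndepFun (fun ω => fun p : Fin d × ℝ => Bm p.1 p.2 ω)
      (fun ω => ((fun i : ℕ => X i ω), (fun i : ℕ => τ i ω),
        (fun p : Fin d × ℝ => c p.1 p.2 ω))) P)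
    :
    Tendsto (fun x : ℝ =>
        (P {ω | ∃ t : ℝ, 0 ≤ t ∧ surplus r x l c δv Bm X τ t ω ∈ L}).toReal /
          ∑' i : ℕ, (P {ω | Real.exp (-(r * τ i ω)) • X i ω ∈ x • A}).toReal)
      atTop (𝓝 1) := by
  obtain ⟨q₁, q₂, hq₁, hq₁J, -, hJq₂, hsm⟩ := hmom
  have geo : Geo A L l := ⟨hLopen, hLdec, hL0, hLconv, hLcone, hl, hAdef⟩
  have hhm : Measurable (projA A) := geo.meas
  set g := tailA A F with hgdef
  set lam := F.map (projA A) with hlamdef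
  have hlamp : IsProbabilityMeasure lam := Measure.isProbabilityMeasure_map hhm.aemeasurable
  have hg : ∀ x, g x = lam.real (Ioi x) := by
    intro x
    rw [measureReal_def, hlamdef, Measure.map_apply hhm measurableSet_Ioi]
    rfl
  have hanti : Antitone g := by
    intro x y hxy
    rw [hg, hg]
    exact measureReal_mono (Ioi_subset_Ioi hxy)
  have hle1 : ∀ x, g x ≤ 1 := fun x => by
    rw [hg]
    exact measureReal_le_one
  set p : ℝ := if Jplus g < 1 then 1 else q₂ with hp
  have hp1 : 1 ≤ p := by
    rw [hp]
    split_ifs with hJ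
    · exact le_rfl
    · linarith
  have hpJ : Jplus g < p := by
    rw [hp]
    split_ifs with hJ
    · exact hJ
    · exact hJq₂
  have hp0 : 0 < p := by linarith
  obtain ⟨v, κ, hv, hκ, hκv, hev⟩ := Jplus_event hFpos hanti hFC hpJ
  obtain ⟨v', hv', hev'⟩ := Jminus_event hFpos hanti hFC hq₁J
  obtain ⟨C, x₀, hC, hx₀, pot⟩ := potter_upper hFpos hanti hq₁ hv' hev'
  obtain ⟨K, x₁, hK, hx₁, kar⟩ := karamata_law lam hg hFpos hp1 hv hκv hev
  obtain ⟨Cl, xl, hCl, hxl, hlow⟩ := poly_lower hFpos hanti hle1 hp0 hv hκv hev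
  set Y : ℕ → Ω → ℝ := fun i ω => projA A (X i ω) with hY
  set θ : ℕ → Ω → ℝ := fun i ω => Real.exp (-(r * τ i ω)) with hθ
  have hYm : ∀ i, Measurable (Y i) := fun i => hhm.comp (hXmeas i)
  have hlaw : ∀ i, P.map (Y i) = lam := by
    intro i
    rw [hlamdef, ← hXdist i, Measure.map_map hhm (hXmeas i)]
    rfl
  have hPY : ∀ i x, (P {ω | x < projA A (X i ω)}).toReal = g x := by
    intro i x
    rw [hg, ← hlaw i, measureReal_def, Measure.map_apply (hYm i) measurableSet_Ioi]
    rfl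
  have hθq : ∀ i ω, θ i ω ^ q₁ = Real.exp (-(q₁ * (r * τ i ω))) := by
    intro i ω
    rw [hθ, ← Real.exp_mul]
    congr 1
    ring
  have hint0 : ∀ i, 0 ≤ ∫ ω, Real.exp (-(q₁ * (r * τ i ω))) ∂P := fun i =>
    integral_nonneg fun ω => (Real.exp_pos _).le
  have hs1 : Summable fun i => (∫ ω, Real.exp (-(q₁ * (r * τ i ω))) ∂P) ^ (1 / p) := by
    refine Summable.of_nonneg_of_le (fun i => Real.rpow_nonneg (hint0 i) _) (fun i => ?_) hsm
    exact Real.rpow_le_rpow (hint0 i) (le_max_left _ _) (by positivity)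
  have W : WSum P lam g Y θ p q₁ C x₀ K x₁ :=
    { hY := hYm
      hθ := fun i => by have := hτmeas i; simp only [hθ]; fun_prop
      hY0 := fun i ω => Geo.nonneg _
      hlaw := hlaw
      hθ0 := fun i ω => Real.exp_pos _
      hθ1 := fun i ω => Real.exp_le_one_iff.2 (by
        have := mul_nonneg hr.le (hτnn i ω)
        linarith)
      hind := fun i => hindep.comp (φ := fun f : ℕ → Fin d → ℝ => projA A (f i))
        (ψ := fun f : ℕ → ℝ => Real.exp (-(r * f i)))
        (hhm.comp (measurable_pi_apply i)) (by fun_prop)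
      hg := hg
      hpos := hFpos
      hp := hp1
      hq := hq₁
      hC := hC
      hx₀ := hx₀
      pot := pot
      hK := hK
      hx₁ := hx₁
      kar := kar
      hsum := by
        simp_rw [hθq]
        exact hs1
      hH1 := fun η hη => classC_event hFpos hFC hη
      hHD := fun s => classD_event hFpos hanti hFC s
      hQ := by
        intro i j hij
        have h1 := (hQAI i j hij).const_mul 2
        rw [mul_zero] at h1
        refine h1.congr fun x => ?_
        rw [hPY, hPY, measureReal_def]
        have := hFpos x
        field_simp
        ring }
  have hnull := null_tau P hr hq₁ τ hτmeas hτnn hτmono (by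
    have := W.a_summable.tendsto_atTop_zero
    simp_rw [hθq] at this
    exact this)
  obtain ⟨m, hm0, hm⟩ : ∃ m : ℝ, 0 < m ∧ ∀ k, 6 * m * δv k ≤ l k := by
    have h1 : ∀ k, ∀ᶠ m in 𝓝 (0 : ℝ), 6 * m * δv k ≤ l k := by
      intro k
      have hc : Tendsto (fun m : ℝ => 6 * m * δv k) (𝓝 0) (𝓝 (6 * 0 * δv k)) :=
        Continuous.tendsto (by fun_prop) 0
      rw [mul_zero, zero_mul] at hc
      exact (hc.eventually (gt_mem_nhds (hl k))).mono fun _ hh => hh.le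
    have h2 : ∀ᶠ m in 𝓝[>] (0 : ℝ), ∀ k, 6 * m * δv k ≤ l k :=
      nhdsWithin_le_nhds (eventually_all.2 h1)
    obtain ⟨m, h3, h4⟩ := (h2.and self_mem_nhdsWithin).exists
    exact ⟨m, h4, h3⟩
  have hbig : ∀ ε, 0 < ε → ∀ᶠ x in atTop, ∀ k, M k / r ≤ ε * x * l k / 2 := by
    intro ε hε
    refine eventually_all.2 fun k => ?_
    have hlk := hl k
    filter_upwards [((tendsto_id (α := ℝ)).const_mul_atTop
      (by positivity : 0 < ε * l k / 2)).eventually_ge_atTop (M k / r)] with x hx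
    simp only [id] at hx
    linarith
  have hcore : ∀ ε x : ℝ, 0 < ε → 0 < x → (∀ k, M k / r ≤ ε * x * l k / 2) →
      ∀ ω, ω ∉ excSet r τ Bm (ε * m * x) → _ := fun ε x hε hx hb ω hω =>
    surplus_core geo hr X τ hXnn hτnn c M hcnn hcbd δv hδv Bm hε (mul_pos hε hm0) hx
      (fun k => by
        have := mul_le_mul_of_nonneg_left (hm k) hε.le
        linarith) hb hω
  have main := W.main (fun x => {ω | ∃ t : ℝ, 0 ≤ t ∧ surplus r x l c δv Bm X τ t ω ∈ L})
    (fun ε x => excSet r τ Bm (ε * m * x))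
    (fun ε hε => excSet_negl P hr τ Bm hnull hB0 hBmeas hBcont hBgauss hFpos hCl hxl hlow
      (mul_pos hε hm0))
    (by
      intro ε hε hε1
      filter_upwards [hbig ε hε, eventually_gt_atTop 0] with x hx hx0 ω hω
      by_cases hc : ω ∈ excSet r τ Bm (ε * m * x)
      · exact Or.inl hc
      · exact Or.inr ((hcore ε x hε hx0 hx ω hc).1 hω hε1))
    (by
      intro ε hε
      filter_upwards [hbig ε hε, eventually_gt_atTop 0] with x hx hx0 i ω hω
      by_cases hc : ω ∈ excSet r τ Bm (ε * m * x)
      · exact Or.inr hc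
      · exact Or.inl ((hcore ε x hε hx0 hx ω hc).2 i hω))
  refine main.congr' ?_
  filter_upwards [eventually_gt_atTop 0] with x hx
  have hset : ∀ i, {ω | Real.exp (-(r * τ i ω)) • X i ω ∈ x • A} = {ω | x < Y i ω * θ i ω} := by
    intro i
    ext ω
    simp only [mem_ofPred_eq, hY, hθ]
    rw [geo.mem_smul hx, ← geo.lt_iff hx, geo.homog (Real.exp_pos _)]
  simp only [hset, measureReal_def]
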